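/- Let R be a commutative Noetherian ring and 𝔞 a proper ideal of R such that either dim R/𝔞 = 2, or dim R = 3, or ara(𝔞) = 2. Let M be an R-module such that Ext^i_R(R/𝔞, M) is a finitely generated R-module for every i ≥ 0. If either H^{2i}_𝔞(M) is 𝔞-cofinite for every i ≥ 0, or H^{2i+1}_𝔞(M) is 𝔞-cofinite for every i ≥ 0, then H^i_𝔞(M) is 𝔞-cofinite for every i ≥ 0. -/

import Mathlib

open CategoryTheory

universe u

/-- The `R`-module `Ext^i_R(N, M)` for two `R`-modules (objects of `ModuleCat R`). -/
noncomputable def extObj {R : Type u} [CommRing R] (N M : ModuleCat.{u} R) (i : ℕ) :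
    ModuleCat.{u} R :=
  ((Ext R (ModuleCat.{u} R) i).obj (Opposite.op N)).obj M

/-- The `R`-module `Ext^i_R(R/𝔞, M)`. -/
noncomputable def extIdeal {R : Type u} [CommRing R] (𝔞 : Ideal R) (i : ℕ)
    (M : ModuleCat.{u} R) : ModuleCat.{u} R :=
  extObj (ModuleCat.of R (R ⧸ 𝔞)) M i

/-- An `R`-module `M` is `𝔞`-cofinite if `Supp_R M ⊆ V(𝔞)` and `Ext^i_R(R/𝔞, M)` is a finitely
generated `R`-module for every `i ≥ 0`. -/
def IsCofinite {R : Type u} [CommRing R] (𝔞 : Ideal R) (M : ModuleCat.{u} R) : Prop :=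
  Module.support R M ⊆ PrimeSpectrum.zeroLocus (𝔞 : Set R) ∧
    ∀ i : ℕ, Module.Finite R (extIdeal 𝔞 i M)

/-- The Krull dimension `dim_R M` of an `R`-module `M`: the Krull dimension of its support,
i.e. the supremum of `dim R/𝔭` over primes `𝔭` in the support of `M`. -/
noncomputable def moduleDim (R : Type u) [CommRing R] (M : Type u) [AddCommGroup M]
    [Module R M] : WithBot ℕ∞ :=
  Order.krullDim (Module.support R M)

/-- An `R`-module `M` is in `FD_{≤n}` if there is a finitely generated submodule `N ⊆ M`
with `dim_R (M/N) ≤ n`. -/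
def MemFD (R : Type u) [CommRing R] (n : ℕ) (M : Type u) [AddCommGroup M] [Module R M] : Prop :=
  ∃ N : Submodule R M, N.FG ∧ moduleDim R (M ⧸ N) ≤ (n : WithBot ℕ∞)

/-- An `R`-module `M` is `𝔞`-torsion if every element is annihilated by some power of `𝔞`. -/
def IsTorsionIdeal {R : Type u} [CommRing R] (𝔞 : Ideal R) (M : Type u) [AddCommGroup M]
    [Module R M] : Prop :=
  ∀ m : M, ∃ n : ℕ, ∀ a ∈ 𝔞 ^ n, a • m = 0

/-- The arithmetic rank of an ideal `𝔞`: the least `n` such that there exist `a₁, …, aₙ ∈ R`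
with `Rad (a₁, …, aₙ) = Rad 𝔞`. -/
noncomputable def arithRank {R : Type u} [CommRing R] (𝔞 : Ideal R) : ℕ :=
  sInf {n : ℕ | ∃ f : Fin n → R, (Ideal.span (Set.range f)).radical = 𝔞.radical}

/-!
Embed `M ⧸ Γ(M)` into a module `E` with `Extⁱ(R ⧸ 𝔞 ^ t, E) = 0` for all `i` and `t`, namely
`J ⧸ Γ(J)` for an injective module `J` containing `M`, and let `T` be the cokernel. Then
`H^{i+1}(M) = H^i(T)`, and `H^0(M) = Γ(M)`; iterating, `H^i(M) = Γ(T i)` for a sequence of modules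
with `T 0 = M`. If `Γ(T i)` and `Ext(R ⧸ 𝔞, T i)` are finite, so is `Ext(R ⧸ 𝔞, T (i + 1))`; and if
`Ext(R ⧸ 𝔞, T i)` and `Γ(T (i + 1))` are, so is `Extʲ(R ⧸ 𝔞, Γ(T i))` for `j ≤ 2`. So every other
local cohomology module may be recovered from its neighbour as soon as the finiteness of `Extʲ` for
`j ≤ 2` implies that of all `Extʲ`, for `𝔞`-power torsion modules `N`.

This property of `𝔞` is where the dimension enters. In the derived category, replace `N` by the
fiber of the multiplication by `x ∈ 𝔞`. The finiteness of `Extʲ` for `j ≤ 2` is inherited in both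
directions, and the radical of the annihilator of the cohomology grows to contain `x`. Once this
radical contains `𝔞`, the cohomology itself is finite in degrees `j ≤ 2`. If `ara 𝔞 ≤ 2`, this takes
two steps, after which there is no cohomology in degrees above `2`. If the dimension is bounded,
there may be many steps, and `x` is chosen so that the cohomology in degree `j ≤ 2` is divisible by
`x` up to a module which is finite outside the primes `𝔭` with `dim R/𝔭 < 2 - j`. Such a choice is
possible by secondary decomposition of the localizations of the cohomology at the minimal primes of
its support, which are Artinian.
-/

universe v w

section PowerTorsion

variable {R : Type*} [CommRing R] (𝔞 : Ideal R) (M : Type*) [AddCommGroup M] [Module R M]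

/-- The submodule `Γ_𝔞(M)` of the elements annihilated by some power of `𝔞`. -/
def idealTorsion : Submodule R M where
  carrier := {m | ∃ n : ℕ, ∀ a ∈ 𝔞 ^ n, a • m = 0}
  zero_mem' := ⟨0, by simp⟩
  add_mem' := by
    rintro x y ⟨n, hn⟩ ⟨k, hk⟩
    refine ⟨n + k, fun a ha => ?_⟩
    rw [smul_add, hn a (Ideal.pow_le_pow_right (by lia) ha),
      hk a (Ideal.pow_le_pow_right (by lia) ha), add_zero]
  smul_mem' := by
    rintro r x ⟨n, hn⟩
    exact ⟨n, fun a ha => by rw [smul_comm, hn a ha, smul_zero]⟩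

/-- `M = Γ_𝔞(M)`; unlike `IsTorsionIdeal`, with no constraint on the universe of `M`. -/
def IsPowerTorsion : Prop :=
  ∀ m : M, ∃ n : ℕ, ∀ a ∈ 𝔞 ^ n, a • m = 0

variable {𝔞 M} {A B C : Type*} [AddCommGroup A] [Module R A] [AddCommGroup B] [Module R B]
  [AddCommGroup C] [Module R C]

theorem isPowerTorsion_idealTorsion : IsPowerTorsion 𝔞 (idealTorsion 𝔞 M) := by
  rintro ⟨m, n, hn⟩
  exact ⟨n, fun a ha => Subtype.ext (hn a ha)⟩

theorem IsPowerTorsion.of_surjective (h : IsPowerTorsion 𝔞 A) {f : A →ₗ[R] B}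
    (hf : Function.Surjective f) : IsPowerTorsion 𝔞 B :=
  hf.forall.2 fun z => (h z).imp fun _ hk r hr => by rw [← map_smul, hk r hr, map_zero]

theorem IsPowerTorsion.quotient (h : IsPowerTorsion 𝔞 M) (G : Submodule R M) :
    IsPowerTorsion 𝔞 (M ⧸ G) :=
  h.of_surjective G.mkQ_surjective

theorem exists_pow_smul_eq_zero_of_fg {N : Submodule R M} (hN : N.FG) (h : N ≤ idealTorsion 𝔞 M) :
    ∃ n : ℕ, ∀ a ∈ 𝔞 ^ n, ∀ x ∈ N, a • x = 0 := by
  induction N, hN using Submodule.fg_induction with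
  | singleton x =>
    obtain ⟨n, hn⟩ := h (Submodule.mem_span_singleton_self x)
    refine ⟨n, fun a ha y hy => ?_⟩
    obtain ⟨r, rfl⟩ := Submodule.mem_span_singleton.mp hy
    rw [smul_comm, hn a ha, smul_zero]
  | sup N₁ N₂ _ _ h₁ h₂ =>
    obtain ⟨n, hn⟩ := h₁ (le_sup_left.trans h)
    obtain ⟨k, hk⟩ := h₂ (le_sup_right.trans h)
    refine ⟨n + k, fun a ha z hz => ?_⟩
    obtain ⟨x, hx, y, hy, rfl⟩ := Submodule.mem_sup.mp hz
    rw [smul_add, hn a (Ideal.pow_le_pow_right (by lia) ha) x hx,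
      hk a (Ideal.pow_le_pow_right (by lia) ha) y hy, add_zero]

theorem mem_idealTorsion_of_forall_smul_mem [IsNoetherianRing R] {m : M} {n : ℕ}
    (h : ∀ a ∈ 𝔞 ^ n, a • m ∈ idealTorsion 𝔞 M) : m ∈ idealTorsion 𝔞 M := by
  obtain ⟨k, hk⟩ := exists_pow_smul_eq_zero_of_fg (𝔞 := 𝔞)
    ((IsNoetherian.noetherian (𝔞 ^ n)).map (LinearMap.toSpanSingleton R M m))
    (by rintro _ ⟨a, ha, rfl⟩; exact h a ha)
  refine ⟨k + n, fun a ha => ?_⟩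
  rw [pow_add] at ha
  induction ha using Submodule.mul_induction_on' with
  | mem_mul_mem a ha b hb => rw [mul_smul]; exact hk a ha _ ⟨b, hb, rfl⟩
  | add x _ y _ hx hy => rw [add_smul, hx, hy, add_zero]

theorem idealTorsion_quotient [IsNoetherianRing R] :
    idealTorsion 𝔞 (M ⧸ idealTorsion 𝔞 M) = ⊥ := by
  rw [eq_bot_iff]
  intro x hx
  obtain ⟨m, rfl⟩ := Submodule.Quotient.mk_surjective _ x
  obtain ⟨n, hn⟩ := hx
  refine (Submodule.Quotient.mk_eq_zero _).mpr (mem_idealTorsion_of_forall_smul_mem (n := n) ?_)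
  exact fun a ha => (Submodule.Quotient.mk_eq_zero _).mp (hn a ha)

theorem IsPowerTorsion.of_exact [IsNoetherianRing R] {f : A →ₗ[R] B} {g : B →ₗ[R] C}
    (hfg : Function.Exact f g) (hA : IsPowerTorsion 𝔞 A) (hC : IsPowerTorsion 𝔞 C) :
    IsPowerTorsion 𝔞 B := fun b => by
  obtain ⟨k, hk⟩ := hC (g b)
  refine mem_idealTorsion_of_forall_smul_mem (n := k) fun r hr => ?_
  obtain ⟨a, ha⟩ := (hfg (r • b)).1 (by rw [map_smul, hk r hr])
  obtain ⟨m, hm⟩ := hA a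
  exact ⟨m, fun s hs => by rw [← ha, ← map_smul, hm s hs, map_zero]⟩

-- By Artin–Rees, `𝔞 ^ m ∩ I ⊆ 𝔞 ^ n I`, and `𝔞 ^ n` kills the finitely generated range of `f`.
theorem IsPowerTorsion.exists_pow_forall_mem_apply_eq_zero [IsNoetherianRing R]
    (hM : IsPowerTorsion 𝔞 M) {I : Ideal R} (f : I →ₗ[R] M) :
    ∃ m : ℕ, ∀ x : I, (x : R) ∈ 𝔞 ^ m → f x = 0 := by
  obtain ⟨n, hn⟩ := exists_pow_smul_eq_zero_of_fg (𝔞 := 𝔞) (N := LinearMap.range f)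
    (Module.Finite.iff_fg.mp inferInstance) fun z _ => hM z
  obtain ⟨k, hk⟩ := Ideal.exists_pow_inf_eq_pow_smul (M := R) 𝔞 I
  have hle : 𝔞 ^ (n + k) ⊓ I ≤ (LinearMap.ker f).map I.subtype := by
    have h := hk (n + k) (Nat.le_add_left k n)
    rw [Nat.add_sub_cancel, smul_eq_mul, Ideal.mul_top] at h
    rw [h, Submodule.smul_le]
    exact fun a ha y hy => ⟨a • ⟨y, hy.2⟩, (map_smul f a _).trans (hn a ha _ ⟨_, rfl⟩), rfl⟩
  refine ⟨n + k, fun x hx => ?_⟩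
  obtain ⟨y, hy, hyx⟩ := hle ⟨hx, x.2⟩
  rwa [Subtype.ext hyx] at hy

theorem injective_idealTorsion {R : Type u} [CommRing R] [IsNoetherianRing R] {𝔞 : Ideal R}
    {M : Type u} [AddCommGroup M] [Module R M] [Module.Injective R M] :
    Module.Injective R (idealTorsion 𝔞 M) := by
  refine Module.Baer.injective fun I f => ?_
  obtain ⟨m, hm⟩ := isPowerTorsion_idealTorsion.exists_pow_forall_mem_apply_eq_zero f
  let g : (I ⧸ Submodule.comap I.subtype (𝔞 ^ m)) →ₗ[R] M :=
    Submodule.liftQ _ ((idealTorsion 𝔞 M).subtype ∘ₗ f) fun x hx => congrArg Subtype.val (hm x hx)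
  obtain ⟨h, hh⟩ := Module.Injective.out
    (Submodule.mapQ (Submodule.comap I.subtype (𝔞 ^ m)) (𝔞 ^ m) I.subtype le_rfl)
    (by
      rw [← LinearMap.ker_eq_bot, Submodule.ker_mapQ]
      exact Submodule.mkQ_map_self _) g
  have hmem (r : R) : h (Submodule.Quotient.mk r) ∈ idealTorsion 𝔞 M := by
    refine ⟨m, fun a ha => ?_⟩
    rw [← map_smul, ← Submodule.Quotient.mk_smul, smul_eq_mul,
      (Submodule.Quotient.mk_eq_zero _).mpr (Ideal.mul_mem_right _ _ ha), map_zero]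
  exact ⟨(h ∘ₗ Submodule.mkQ _).codRestrict _ hmem, fun x hx =>
    Subtype.ext (hh (Submodule.Quotient.mk ⟨x, hx⟩))⟩

end PowerTorsion

section FiniteOutside

variable {R : Type*} [CommRing R] {A B C : Type*} [AddCommGroup A] [Module R A]
  [AddCommGroup B] [Module R B] [AddCommGroup C] [Module R C]

/-- Away from the set of primes `W`, the module `N` agrees with a finitely generated submodule.
For `W` the primes `𝔭` with `dim R/𝔭 ≤ n` this is the class `FD_{≤n}`, and for `W = ∅` it is
finite generation. -/
def FiniteOutside (W : Set (PrimeSpectrum R)) (N : Type*) [AddCommGroup N] [Module R N] : Prop :=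
  ∃ G : Submodule R N, G.FG ∧ Module.support R (N ⧸ G) ⊆ W

variable {W : Set (PrimeSpectrum R)}

theorem support_quotient_subset_iff {G : Submodule R A} :
    Module.support R (A ⧸ G) ⊆ W ↔ ∀ p ∉ W, ∀ z : A, ∃ s ∉ p.asIdeal, s • z ∈ G := by
  rw [← Set.compl_subset_compl]
  refine forall₂_congr fun p _ => ?_
  rw [Set.mem_compl_iff, Module.notMem_support_iff', G.mkQ_surjective.forall]
  simp only [Submodule.mkQ_apply, ← Submodule.Quotient.mk_smul, Submodule.Quotient.mk_eq_zero]

theorem finiteOutside_iff :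
    FiniteOutside W A ↔
      ∃ G : Submodule R A, G.FG ∧ ∀ p ∉ W, ∀ z : A, ∃ s ∉ p.asIdeal, s • z ∈ G := by
  simp only [FiniteOutside, support_quotient_subset_iff]

theorem FiniteOutside.of_finite [Module.Finite R A] : FiniteOutside W A :=
  ⟨⊤, Module.Finite.fg_top, by simp [Module.support_eq_empty]⟩

theorem FiniteOutside.of_support_subset (h : Module.support R A ⊆ W) : FiniteOutside W A :=
  ⟨⊥, Submodule.fg_bot,
    (Module.support_subset_of_surjective _ (Submodule.mkQ_surjective ⊥)).trans h⟩

theorem FiniteOutside.finite (h : FiniteOutside (∅ : Set (PrimeSpectrum R)) A) :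
    Module.Finite R A := by
  obtain ⟨G, hG, h⟩ := h
  rw [Set.subset_empty_iff, Module.support_eq_empty_iff, Submodule.Quotient.subsingleton_iff] at h
  exact ⟨h ▸ hG⟩

theorem FiniteOutside.of_locally_surjective (f : A →ₗ[R] B)
    (hf : ∀ p ∉ W, ∀ b : B, ∃ s ∉ p.asIdeal, s • b ∈ LinearMap.range f) (h : FiniteOutside W A) :
    FiniteOutside W B := by
  obtain ⟨G, hG, h⟩ := finiteOutside_iff.1 h
  refine finiteOutside_iff.2 ⟨G.map f, hG.map f, fun p hp b => ?_⟩
  obtain ⟨s, hs, a, ha⟩ := hf p hp b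
  obtain ⟨t, ht, hta⟩ := h p hp a
  refine ⟨t * s, p.asIdeal.primeCompl.mul_mem ht hs, t • a, hta, ?_⟩
  rw [map_smul, ha, mul_smul]

theorem FiniteOutside.of_surjective (f : A →ₗ[R] B) (hf : Function.Surjective f)
    (h : FiniteOutside W A) : FiniteOutside W B :=
  h.of_locally_surjective f fun p _ _ => ⟨1, p.asIdeal.one_notMem, hf _⟩

theorem FiniteOutside.pi {ι : Type*} [Finite ι] (h : FiniteOutside W A) :
    FiniteOutside W (ι → A) := by
  obtain ⟨G, hG, h⟩ := finiteOutside_iff.1 h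
  have := Module.Finite.iff_fg.2 hG
  have := Fintype.ofFinite ι
  refine .of_locally_surjective (G.subtype.compLeft ι) (fun p hp z => ?_) .of_finite
  choose s hs hz using fun i => h p hp (z i)
  refine ⟨∏ i, s i, fun hprod => ?_, fun i => ⟨(∏ i, s i) • z i, ?_⟩, rfl⟩
  · obtain ⟨i, -, hi⟩ := p.2.prod_mem_iff.1 hprod
    exact hs i hi
  · obtain ⟨c, hc⟩ := Finset.dvd_prod_of_mem s (Finset.mem_univ i)
    rw [hc, mul_comm, mul_smul]
    exact G.smul_mem c (hz i)

theorem exists_fg_map_eq {g : B →ₗ[R] C} {T : Submodule R C} (hT : T.FG)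
    (hTg : T ≤ LinearMap.range g) : ∃ L : Submodule R B, L.FG ∧ L.map g = T := by
  classical
  obtain ⟨S, rfl⟩ := hT
  obtain ⟨S', -, rfl⟩ := Finset.subset_set_image_iff.1
    (show (S : Set C) ⊆ g '' Set.univ from fun x hx => by
      simpa using hTg (Submodule.subset_span hx))
  exact ⟨Submodule.span R S', ⟨S', rfl⟩, by rw [Submodule.map_span, Finset.coe_image]⟩

variable [IsNoetherianRing R]

theorem FiniteOutside.of_injective (f : A →ₗ[R] B) (hf : Function.Injective f)
    (h : FiniteOutside W B) : FiniteOutside W A := by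
  obtain ⟨G, hG, h⟩ := finiteOutside_iff.1 h
  refine finiteOutside_iff.2 ⟨G.comap f, Submodule.fg_of_fg_map_injective f hf ?_, fun p hp z =>
    (h p hp (f z)).imp fun s hs => ⟨hs.1, by simpa using hs.2⟩⟩
  exact .of_le hG (Submodule.map_comap_le f G)

theorem FiniteOutside.of_exact (f : A →ₗ[R] B) (g : B →ₗ[R] C) (hfg : Function.Exact f g)
    (hA : FiniteOutside W A) (hC : FiniteOutside W C) : FiniteOutside W B := by
  obtain ⟨G, hG, hA⟩ := finiteOutside_iff.1 hA
  obtain ⟨K, hK, hC⟩ := finiteOutside_iff.1 hC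
  obtain ⟨L, hL, hLK⟩ := exists_fg_map_eq (g := g) (.of_le hK inf_le_left)
    (inf_le_right : K ⊓ LinearMap.range g ≤ _)
  refine finiteOutside_iff.2 ⟨G.map f ⊔ L, (hG.map f).sup hL, fun p hp z => ?_⟩
  obtain ⟨s, hs, hsz⟩ := hC p hp (g z)
  obtain ⟨l, hl, hlz⟩ : s • g z ∈ L.map g := hLK ▸ ⟨hsz, s • z, by simp⟩
  obtain ⟨a, ha⟩ := (hfg (s • z - l)).1 (by simp [hlz])
  obtain ⟨t, ht, hta⟩ := hA p hp a
  refine ⟨t * s, p.asIdeal.primeCompl.mul_mem ht hs, ?_⟩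
  have : (t * s) • z = f (t • a) + t • l := by
    rw [map_smul, ha, smul_sub, mul_smul, sub_add_cancel]
  rw [this]
  exact Submodule.add_mem_sup (Submodule.mem_map_of_mem hta) (L.smul_mem _ hl)

end FiniteOutside

section TorsionBySet

variable {R : Type*} [CommRing R] {A B C : Type*} [AddCommGroup A] [Module R A]
  [AddCommGroup B] [Module R B] [AddCommGroup C] [Module R C]
  {W : Set (PrimeSpectrum R)} {𝔞 : Ideal R}

theorem mem_torsionBySet_ideal {z : A} :
    z ∈ Submodule.torsionBySet R A (𝔞 : Set R) ↔ ∀ r ∈ 𝔞, r • z = 0 := by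
  simp [Submodule.mem_torsionBySet_iff]

/-- The map `(0 :_A I) → (0 :_B I)` induced by a linear map `f : A → B`. -/
def torsionBySetMap (I : Ideal R) (f : A →ₗ[R] B) :
    Submodule.torsionBySet R A (I : Set R) →ₗ[R] Submodule.torsionBySet R B (I : Set R) :=
  f.restrict fun z hz => mem_torsionBySet_ideal.2 fun r hr => by
    rw [← map_smul, mem_torsionBySet_ideal.1 hz r hr, map_zero]

theorem torsionBySetMap_injective (I : Ideal R) {f : A →ₗ[R] B} (hf : Function.Injective f) :
    Function.Injective (torsionBySetMap I f) :=
  fun _ _ h => Subtype.ext (hf (congrArg Subtype.val h))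

theorem torsionBySetMap_exact (I : Ideal R) {f : A →ₗ[R] B} {g : B →ₗ[R] C}
    (hf : Function.Injective f) (hfg : Function.Exact f g) :
    Function.Exact (torsionBySetMap I f) (torsionBySetMap I g) := by
  rintro ⟨b, hb⟩
  rw [mem_torsionBySet_ideal] at hb
  constructor
  · intro h
    obtain ⟨a, rfl⟩ := (hfg b).1 (congrArg Subtype.val h)
    refine ⟨⟨a, mem_torsionBySet_ideal.2 fun r hr => hf ?_⟩, rfl⟩
    rw [map_smul, hb r hr, map_zero]
  · rintro ⟨a, ha⟩
    exact Subtype.ext ((hfg b).2 ⟨a, congrArg Subtype.val ha⟩)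

variable [IsNoetherianRing R]

theorem FiniteOutside.of_torsionBySet (I : Ideal R) {G : Submodule R A}
    (hG : ∀ r ∈ I, ∀ z, r • z ∈ G) (h : FiniteOutside W (Submodule.torsionBySet R A (I : Set R)))
    (hGW : FiniteOutside W G) : FiniteOutside W A := by
  obtain ⟨s, hs⟩ := IsNoetherian.noetherian I
  let f : A →ₗ[R] s → G := LinearMap.pi fun r => (LinearMap.lsmul R A (r : R)).codRestrict G
    (hG r (hs ▸ Submodule.subset_span r.2))
  refine .of_exact (Submodule.subtype _) f (fun z => ?_) h hGW.pi
  rw [← hs, ← Ideal.span, ← Submodule.torsionBySet_eq_torsionBySet_span,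
    Submodule.coe_subtype, Subtype.range_val, SetLike.mem_coe, Submodule.mem_torsionBySet_iff,
    funext_iff]
  exact forall_congr' fun r => Subtype.ext_iff

theorem FiniteOutside.torsionBySet_pow
    (h : FiniteOutside W (Submodule.torsionBySet R A (𝔞 : Set R))) (k : ℕ) :
    FiniteOutside W (Submodule.torsionBySet R A ((𝔞 ^ k : Ideal R) : Set R)) := by
  induction k with
  | zero =>
    have : Subsingleton (Submodule.torsionBySet R A ((𝔞 ^ 0 : Ideal R) : Set R)) := by
      rw [pow_zero, Ideal.one_eq_top, Submodule.top_coe, Submodule.torsionBySet_univ]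
      infer_instance
    exact .of_finite
  | succ k ih =>
    let T := Submodule.torsionBySet R A ((𝔞 ^ (k + 1) : Ideal R) : Set R)
    let G := Submodule.torsionBySet R A ((𝔞 ^ k : Ideal R) : Set R)
    have hG : ∀ r ∈ 𝔞, ∀ z : T, r • z ∈ G.comap T.subtype := fun r hr z =>
      mem_torsionBySet_ideal.2 fun s hs => by
        rw [map_smul, ← mul_smul]
        exact mem_torsionBySet_ideal.1 z.2 _ (pow_succ 𝔞 k ▸ Ideal.mul_mem_mul hs hr)
    refine .of_torsionBySet 𝔞 hG ?_ ?_
    · exact .of_injective (torsionBySetMap 𝔞 T.subtype)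
        (torsionBySetMap_injective 𝔞 T.subtype_injective) h
    · exact .of_injective (T.subtype.restrict (q := G) fun _ hz => hz)
        (fun _ _ h => Subtype.ext (Subtype.ext (congrArg G.subtype h))) ih

end TorsionBySet

section SoclesFiniteOutside

variable {R : Type*} [CommRing R] {A B C : Type*} [AddCommGroup A] [Module R A]
  [AddCommGroup B] [Module R B] [AddCommGroup C] [Module R C]
  {W : Set (PrimeSpectrum R)} {𝔞 : Ideal R}

/-- The submodule `(0 : 𝔞)` of every quotient of `N` is finite outside `W`. This closure of the
finiteness of `Hom(R/𝔞, N)` under quotients survives both ends of exact sequences. -/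
def SoclesFiniteOutside (W : Set (PrimeSpectrum R)) (𝔞 : Ideal R) (N : Type*) [AddCommGroup N]
    [Module R N] : Prop :=
  ∀ Y : Submodule R N, FiniteOutside W (Submodule.torsionBySet R (N ⧸ Y) (𝔞 : Set R))

theorem SoclesFiniteOutside.of_surjective (f : A →ₗ[R] B) (hf : Function.Surjective f)
    (h : SoclesFiniteOutside W 𝔞 A) : SoclesFiniteOutside W 𝔞 B := by
  intro Y
  let e : (A ⧸ Y.comap f) →ₗ[R] B ⧸ Y := Submodule.mapQ _ _ f le_rfl
  have he : Function.Injective e := by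
    rw [← LinearMap.ker_eq_bot, Submodule.ker_mapQ, Submodule.mkQ_map_self]
  refine .of_surjective (torsionBySetMap 𝔞 e) ?_ (h (Y.comap f))
  rintro ⟨b, hb⟩
  obtain ⟨b, rfl⟩ := Y.mkQ_surjective b
  obtain ⟨a, rfl⟩ := hf b
  refine ⟨⟨Submodule.mkQ _ a, mem_torsionBySet_ideal.2 fun r hr => he ?_⟩, rfl⟩
  rw [map_smul, map_zero]
  exact mem_torsionBySet_ideal.1 hb r hr

theorem SoclesFiniteOutside.quotient (h : SoclesFiniteOutside W 𝔞 A) (Y : Submodule R A) :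
    SoclesFiniteOutside W 𝔞 (A ⧸ Y) :=
  h.of_surjective Y.mkQ Y.mkQ_surjective

variable [IsNoetherianRing R]

theorem SoclesFiniteOutside.of_finite [Module.Finite R A] : SoclesFiniteOutside W 𝔞 A :=
  fun _ => .of_finite

theorem SoclesFiniteOutside.of_injective (f : A →ₗ[R] B) (hf : Function.Injective f)
    (h : SoclesFiniteOutside W 𝔞 B) : SoclesFiniteOutside W 𝔞 A := by
  intro Y
  let e : (A ⧸ Y) →ₗ[R] B ⧸ Y.map f := Submodule.mapQ _ _ f (Submodule.le_comap_map _ _)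
  have he : Function.Injective e := by
    rw [← LinearMap.ker_eq_bot, Submodule.ker_mapQ, Submodule.comap_map_eq_of_injective hf,
      Submodule.mkQ_map_self]
  exact .of_injective (torsionBySetMap 𝔞 e) (torsionBySetMap_injective 𝔞 he) (h (Y.map f))

theorem SoclesFiniteOutside.of_exact (f : A →ₗ[R] B) (g : B →ₗ[R] C) (hfg : Function.Exact f g)
    (hA : SoclesFiniteOutside W 𝔞 A) (hC : SoclesFiniteOutside W 𝔞 C) :
    SoclesFiniteOutside W 𝔞 B := by
  intro Y
  let f' : (A ⧸ Y.comap f) →ₗ[R] B ⧸ Y := Submodule.mapQ _ _ f le_rfl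
  let g' : (B ⧸ Y) →ₗ[R] C ⧸ Y.map g := Submodule.mapQ _ _ g (Submodule.le_comap_map _ _)
  have hf' : Function.Injective f' := by
    rw [← LinearMap.ker_eq_bot, Submodule.ker_mapQ, Submodule.mkQ_map_self]
  have hfg' : Function.Exact f' g' := by
    rw [LinearMap.exact_iff, Submodule.ker_mapQ, Submodule.comap_map_eq, Submodule.map_sup,
      Submodule.mkQ_map_self, bot_sup_eq, LinearMap.exact_iff.1 hfg, Submodule.range_mapQ]
  exact .of_exact _ _ (torsionBySetMap_exact 𝔞 hf' hfg') (hA _) (hC _)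

theorem SoclesFiniteOutside.torsionBySet (h : SoclesFiniteOutside W 𝔞 A) :
    FiniteOutside W (Submodule.torsionBySet R A (𝔞 : Set R)) := by
  let e : A →ₗ[R] A ⧸ (⊥ : Submodule R A) := Submodule.mkQ ⊥
  have he : Function.Injective e := by rw [← LinearMap.ker_eq_bot, Submodule.ker_mkQ]
  exact .of_injective (torsionBySetMap 𝔞 e) (torsionBySetMap_injective 𝔞 he) (h ⊥)

theorem SoclesFiniteOutside.torsionBy_pow {x : R}
    (h : SoclesFiniteOutside W 𝔞 (Submodule.torsionBy R A x)) (k : ℕ) :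
    SoclesFiniteOutside W 𝔞 (Submodule.torsionBy R A (x ^ k)) := by
  induction k with
  | zero =>
    have : Subsingleton (Submodule.torsionBy R A (x ^ 0)) := by
      rw [pow_zero, Submodule.torsionBy_one]
      infer_instance
    exact .of_finite
  | succ k ih =>
    have h₁ : Submodule.torsionBy R A x ≤ Submodule.torsionBy R A (x ^ (k + 1)) :=
      Submodule.torsionBy_le_torsionBy_of_dvd _ _ (dvd_pow_self x k.succ_ne_zero)
    have h₂ : ∀ z ∈ Submodule.torsionBy R A (x ^ (k + 1)),
        LinearMap.lsmul R A x z ∈ Submodule.torsionBy R A (x ^ k) := fun z hz => by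
      rw [Submodule.mem_torsionBy_iff] at hz ⊢
      rwa [LinearMap.lsmul_apply, ← mul_smul, ← pow_succ]
    refine .of_exact (Submodule.inclusion h₁) ((LinearMap.lsmul R A x).restrict h₂)
      (fun z => ⟨fun hz => ?_, ?_⟩) h ih
    · exact ⟨⟨z, congrArg Subtype.val hz⟩, rfl⟩
    · rintro ⟨w, rfl⟩
      exact Subtype.ext w.2

end SoclesFiniteOutside

section Generic

variable {R : Type*} [CommRing R] {𝔞 : Ideal R}

/-- `P x` holds for every `x ∈ 𝔞` outside finitely many primes not containing `𝔞`. By prime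
avoidance such `x` exist, and finitely many such conditions can be imposed at once. -/
def HoldsGenerically (𝔞 : Ideal R) (P : R → Prop) : Prop :=
  ∃ Q : Set (Ideal R), Q.Finite ∧ (∀ q ∈ Q, q.IsPrime ∧ ¬ 𝔞 ≤ q) ∧
    ∀ x ∈ 𝔞, (∀ q ∈ Q, x ∉ q) → P x

theorem HoldsGenerically.of_forall {P : R → Prop} (h : ∀ x ∈ 𝔞, P x) : HoldsGenerically 𝔞 P :=
  ⟨∅, Set.finite_empty, by simp, fun x hx _ => h x hx⟩

theorem holdsGenerically_notMem {q : Ideal R} (hq : q.IsPrime) (h : ¬ 𝔞 ≤ q) :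
    HoldsGenerically 𝔞 (· ∉ q) :=
  ⟨{q}, Set.finite_singleton q, by simpa using ⟨hq, h⟩, by simp⟩

theorem HoldsGenerically.mp {P P' : R → Prop} (h : HoldsGenerically 𝔞 P)
    (hP : ∀ x ∈ 𝔞, P x → P' x) : HoldsGenerically 𝔞 P' := by
  obtain ⟨Q, hQ, hQp, h⟩ := h
  exact ⟨Q, hQ, hQp, fun x hx hxQ => hP x hx (h x hx hxQ)⟩

theorem HoldsGenerically.and {P P' : R → Prop} (h : HoldsGenerically 𝔞 P)
    (h' : HoldsGenerically 𝔞 P') : HoldsGenerically 𝔞 fun x => P x ∧ P' x := by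
  obtain ⟨Q, hQ, hQp, h⟩ := h
  obtain ⟨Q', hQ', hQp', h'⟩ := h'
  exact ⟨Q ∪ Q', hQ.union hQ', fun q hq => hq.elim (hQp q) (hQp' q), fun x hx hxQ =>
    ⟨h x hx fun q hq => hxQ q (.inl hq), h' x hx fun q hq => hxQ q (.inr hq)⟩⟩

theorem HoldsGenerically.forall_mem {ι : Type*} {s : Set ι} (hs : s.Finite) {P : ι → R → Prop}
    (h : ∀ i ∈ s, HoldsGenerically 𝔞 (P i)) : HoldsGenerically 𝔞 fun x => ∀ i ∈ s, P i x := by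
  choose! Q hQ hQp h using h
  refine ⟨⋃ i ∈ s, Q i, hs.biUnion hQ, fun q hq => ?_, fun x hx hxQ i hi =>
    h i hi x hx fun q hq => hxQ q (Set.mem_biUnion hi hq)⟩
  obtain ⟨i, hi, hq⟩ := Set.mem_iUnion₂.1 hq
  exact hQp i hi q hq

theorem HoldsGenerically.comap {S : Type*} [CommRing S] {f : R →+* S} {P : S → Prop}
    (h : HoldsGenerically (𝔞.map f) P) : HoldsGenerically 𝔞 fun x => P (f x) := by
  obtain ⟨Q, hQ, hQp, h⟩ := h
  refine ⟨Ideal.comap f '' Q, hQ.image _, ?_, fun x hx hxQ =>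
    h _ (Ideal.mem_map_of_mem f hx) fun q hq => hxQ _ ⟨q, hq, rfl⟩⟩
  rintro _ ⟨q, hq, rfl⟩
  exact ⟨(hQp q hq).1.comap f, fun h => (hQp q hq).2 (Ideal.map_le_iff_le_comap.2 h)⟩

theorem HoldsGenerically.exists {P : R → Prop} (h : HoldsGenerically 𝔞 P) : ∃ x ∈ 𝔞, P x := by
  obtain ⟨Q, hQ, hQp, h⟩ := h
  suffices ∃ x ∈ 𝔞, ∀ q ∈ Q, x ∉ q from this.imp fun x hx => ⟨hx.1, h x hx.1 hx.2⟩
  by_contra! H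
  obtain ⟨q, hq, hle⟩ := (Ideal.subset_union_prime (s := hQ.toFinset) (f := id) (I := 𝔞) ⊥ ⊥
    fun q hq _ _ => (hQp q (hQ.mem_toFinset.1 hq)).1).1 fun x hx => by
      obtain ⟨q, hq, hxq⟩ := H x hx
      exact Set.mem_biUnion (hQ.mem_toFinset.2 hq) hxq
  exact (hQp q (hQ.mem_toFinset.1 hq)).2 hle

end Generic

section Artinian

theorem exists_forall_ge_eq_of_antitone {α : Type*} [PartialOrder α] [WellFoundedLT α]
    (f : ℕ → ℕ → α) (h₁ : ∀ t, Antitone fun i => f i t) (h₂ : ∀ i, Antitone (f i)) :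
    ∃ n, ∀ i ≥ n, ∀ t, f i t = f n t := by
  have stab : ∀ g : ℕ → α, Antitone g → ∃ n, ∀ i ≥ n, g i = g n := by
    intro g hg
    obtain ⟨n, hn⟩ := WellFoundedGT.monotone_chain_condition (α := αᵒᵈ)
      ⟨fun i => OrderDual.toDual (g i), hg⟩
    exact ⟨n, fun i hi => (hn i hi).symm⟩
  obtain ⟨n, hn⟩ := stab (fun i => f i i) fun i j hij => (h₁ j hij).trans (h₂ i hij)
  choose m hm using fun t => stab _ (h₁ t)
  refine ⟨n ⊔ (Finset.range n).sup m, fun i hi t => ?_⟩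
  set N := n ⊔ (Finset.range n).sup m
  have hnN : n ≤ N := le_sup_left
  by_cases ht : t < n
  · have : m t ≤ N := (Finset.le_sup (Finset.mem_range.2 ht)).trans le_sup_right
    rw [hm t i (this.trans hi), hm t N this]
  · have key : ∀ i ≥ n, f i t = f n n := fun i hi => by
      refine le_antisymm ((h₁ t hi).trans (h₂ n (not_lt.1 ht))) ?_
      rw [← hn (max i t) (hi.trans (le_max_left _ _))]
      exact (h₁ _ (le_max_left _ _)).trans (h₂ i (le_max_right _ _))
    rw [key i (hnN.trans hi), key N hnN]

variable {S A : Type*} [CommRing S] [AddCommGroup A] [Module S A]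

theorem isArtinian_of_isArtinian_torsionBy (y : S) (hy : ∀ z : A, ∃ k : ℕ, y ^ k • z = 0)
    [IsArtinian S (Submodule.torsionBy S A y)] : IsArtinian S A := by
  rw [← monotone_stabilizes_iff_artinian]
  intro Y
  let F : ℕ → ℕ → Submodule S (Submodule.torsionBy S A y) := fun i t =>
    ((OrderDual.ofDual (Y i)).map (LinearMap.lsmul S A (y ^ t))).comap (Submodule.subtype _)
  have hF : ∀ i t (z : Submodule.torsionBy S A y), z ∈ F i t ↔
      ∃ w ∈ OrderDual.ofDual (Y i), y ^ t • w = z := fun i t z => by simp [F]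
  obtain ⟨n, hn⟩ := exists_forall_ge_eq_of_antitone F
    (fun t i j hij z hz => by
      obtain ⟨w, hw, e⟩ := (hF _ _ _).1 hz
      exact (hF _ _ _).2 ⟨w, Y.2 hij hw, e⟩)
    (fun i => antitone_nat_of_succ_le fun t z hz => by
      obtain ⟨w, hw, e⟩ := (hF _ _ _).1 hz
      exact (hF _ _ _).2 ⟨y • w, Submodule.smul_mem _ _ hw, by rw [← e, pow_succ, mul_smul]⟩)
  refine ⟨n, fun m hm => le_antisymm (Y.2 hm) ?_⟩
  suffices ∀ k, ∀ z ∈ OrderDual.ofDual (Y n), y ^ k • z = 0 → z ∈ OrderDual.ofDual (Y m) from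
    fun z hz => (hy z).elim fun k hk => this k z hz hk
  intro k
  induction k with
  | zero => intro z _ hz; simp only [pow_zero, one_smul] at hz; simp [hz]
  | succ k ih =>
    intro z hz hk
    have : (⟨y ^ k • z, by rwa [Submodule.mem_torsionBy_iff, ← mul_smul, ← pow_succ']⟩ :
        Submodule.torsionBy S A y) ∈ F m k := hn m hm k ▸ (hF _ _ _).2 ⟨z, hz, rfl⟩
    obtain ⟨w, hw, e⟩ := (hF _ _ _).1 this
    have := ih (z - w) (sub_mem hz (Y.2 hm hw)) (by rw [smul_sub, e, sub_self])
    simpa using add_mem this hw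

theorem isArtinian_of_isArtinian_torsionBySet (s : Finset S)
    (hs : ∀ y ∈ s, ∀ z : A, ∃ k : ℕ, y ^ k • z = 0)
    [IsArtinian S (Submodule.torsionBySet S A s)] : IsArtinian S A := by
  classical
  rename_i hA
  induction s using Finset.induction_on generalizing hA with
  | empty =>
    refine isArtinian_of_injective (P := Submodule.torsionBySet S A (∅ : Finset S))
      (LinearMap.codRestrict _ LinearMap.id fun z => ?_) fun a b h => congrArg Subtype.val h
    simp [Submodule.mem_torsionBySet_iff]
  | insert y s _ ih =>
    have : IsArtinian S (Submodule.torsionBySet S A s) := by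
      have : IsArtinian S (Submodule.torsionBy S (Submodule.torsionBySet S A s) y) := by
        refine isArtinian_of_injective (P := Submodule.torsionBySet S A (insert y s : Finset S))
          (LinearMap.codRestrict _ (Submodule.subtype _ ∘ₗ Submodule.subtype _) fun z => ?_)
          fun a b h => by
            have := congrArg Subtype.val h
            exact Subtype.ext (Subtype.ext this)
        rw [Submodule.mem_torsionBySet_iff]
        rintro ⟨a, ha⟩
        obtain rfl | ha := Finset.mem_insert.1 ha
        · exact congrArg Subtype.val ((Submodule.mem_torsionBy_iff _ _).1 z.2)
        · exact (Submodule.mem_torsionBySet_iff _ _).1 z.1.2 ⟨a, ha⟩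
      exact isArtinian_of_isArtinian_torsionBy y fun z => by
        obtain ⟨k, hk⟩ := hs y (by simp) z
        exact ⟨k, Subtype.ext hk⟩
    exact ih fun y hy => hs y (by simp [hy])

theorem isArtinian_of_finite_torsionBySet_maximalIdeal [IsNoetherianRing S] [IsLocalRing S]
    (h : ∀ y ∈ IsLocalRing.maximalIdeal S, ∀ z : A, ∃ k : ℕ, y ^ k • z = 0)
    [Module.Finite S (Submodule.torsionBySet S A (IsLocalRing.maximalIdeal S))] :
    IsArtinian S A := by
  obtain ⟨s, hs⟩ := (IsLocalRing.maximalIdeal S).fg_of_isNoetherianRing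
  let V := Submodule.torsionBySet S A (IsLocalRing.maximalIdeal S)
  have hV : Module.IsTorsionBySet S V (IsLocalRing.maximalIdeal S) :=
    Submodule.torsionBySet_isTorsionBySet _
  let := hV.module
  have : IsScalarTower S (S ⧸ IsLocalRing.maximalIdeal S) V := hV.isScalarTower
  let := Ideal.Quotient.field (IsLocalRing.maximalIdeal S)
  have : Module.Finite (S ⧸ IsLocalRing.maximalIdeal S) V :=
    Module.Finite.of_restrictScalars_finite S _ _
  have : IsArtinian S V := isArtinian_of_surjective_algebraMap
    (R := S ⧸ IsLocalRing.maximalIdeal S) Ideal.Quotient.mk_surjective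
  have : IsArtinian S (Submodule.torsionBySet S A s) := by
    rw [Submodule.torsionBySet_eq_torsionBySet_span]
    exact hs ▸ this
  exact isArtinian_of_isArtinian_torsionBySet s fun y hy =>
    h y (hs ▸ Ideal.subset_span hy)

end Artinian

section Secondary

variable {S A : Type*} [CommRing S] [AddCommGroup A] [Module S A]

variable (S A) in
/-- Every scalar acts on `A` surjectively or nilpotently. The zero module is allowed, unlike in
the usual definition of a secondary module. -/
def IsSecondary : Prop :=
  ∀ x : S, LinearMap.range (LinearMap.lsmul S A x) = ⊤ ∨ x ∈ (Module.annihilator S A).radical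

-- Fitting's decomposition `P = ker xⁿ + xⁿP` for `n ≫ 0`.
theorem isSecondary_of_supIrred [IsArtinian S A] {P : Submodule S A} (hP : SupIrred P) :
    IsSecondary S P := by
  intro x
  let f : Module.End S P := LinearMap.lsmul S P x
  obtain ⟨n, hn, hn0⟩ := (f.eventually_codisjoint_ker_pow_range_pow.and
    (Filter.eventually_ne_atTop 0)).exists
  have hsup :
      (LinearMap.ker (f ^ n)).map P.subtype ⊔ (LinearMap.range (f ^ n)).map P.subtype = P := by
    rw [← Submodule.map_sup, hn.eq_top, Submodule.map_subtype_top]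
  have top_of_map {T : Submodule S P} (h : T.map P.subtype = P) : T = ⊤ :=
    Submodule.map_injective_of_injective P.injective_subtype (by rw [h, Submodule.map_subtype_top])
  refine (hP.2 hsup).symm.imp (fun h => top_le_iff.1 ?_) fun h => ⟨n, ?_⟩
  · rw [← top_of_map h, ← Nat.succ_pred_eq_of_ne_zero hn0, pow_succ']
    exact LinearMap.range_comp_le_range _ _
  · rw [Module.mem_annihilator]
    intro z
    have : f ^ n = LinearMap.lsmul S P (x ^ n) := (map_pow (Module.toModuleEnd _ _) x n).symm
    rw [← LinearMap.lsmul_apply, ← this, LinearMap.ker_eq_top.1 (top_of_map h)]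
    rfl

theorem IsSecondary.isPrime_radical_annihilator [Nontrivial A] (h : IsSecondary S A) :
    (Module.annihilator S A).radical.IsPrime := by
  refine Ideal.isPrime_iff.2 ⟨?_, fun {x y} hxy => or_iff_not_imp_right.2 fun hy => ?_⟩
  · rw [Ne, Ideal.radical_eq_top, Module.annihilator_eq_top_iff]
    exact not_subsingleton A
  obtain ⟨k, hk⟩ := hxy
  refine ⟨k, Module.mem_annihilator.2 fun z => ?_⟩
  have hsurj : Function.Surjective fun z : A => y • z :=
    LinearMap.range_eq_top.1 ((h y).resolve_right hy)
  obtain ⟨w, rfl⟩ := hsurj.iterate k z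
  rw [smul_iterate, ← mul_smul, ← mul_pow, Module.mem_annihilator.1 hk]

variable [IsNoetherianRing S]

theorem IsSecondary.holdsGenerically (h : IsSecondary S A) (𝔟 : Ideal S) :
    HoldsGenerically 𝔟 fun x =>
      ∃ k : ℕ, 𝔟 ^ k • (⊤ : Submodule S A) ≤ LinearMap.range (LinearMap.lsmul S A x) := by
  cases subsingleton_or_nontrivial A
  · exact .of_forall fun x _ => ⟨0, (Subsingleton.elim _ _).le⟩
  by_cases hb : 𝔟 ≤ (Module.annihilator S A).radical
  · obtain ⟨k, hk⟩ := Ideal.exists_pow_le_of_le_radical_of_fg hb (IsNoetherian.noetherian _)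
    refine .of_forall fun x _ => ⟨k, ?_⟩
    rw [Submodule.smul_le]
    exact fun r hr z _ => Module.mem_annihilator.1 (hk hr) z ▸ zero_mem _
  · exact (holdsGenerically_notMem h.isPrime_radical_annihilator hb).mp fun x _ hx =>
      ⟨0, ((h x).resolve_right hx).symm ▸ le_top⟩

theorem holdsGenerically_pow_smul_top_le_range [IsArtinian S A] (𝔟 : Ideal S) :
    HoldsGenerically 𝔟 fun x =>
      ∃ k : ℕ, 𝔟 ^ k • (⊤ : Submodule S A) ≤ LinearMap.range (LinearMap.lsmul S A x) := by
  obtain ⟨s, hs, hirr⟩ := exists_supIrred_decomposition (⊤ : Submodule S A)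
  refine (HoldsGenerically.forall_mem s.finite_toSet fun P hP =>
    (isSecondary_of_supIrred (hirr hP)).holdsGenerically 𝔟).mp fun x _ hx => ?_
  choose! k hk using hx
  refine ⟨s.sup k, ?_⟩
  rw [← hs, Finset.sup_eq_iSup, Submodule.smul_iSup]
  simp only [Submodule.smul_iSup, iSup_le_iff, id_eq]
  intro P hP
  calc 𝔟 ^ s.sup k • P ≤ 𝔟 ^ k P • P :=
        Submodule.smul_mono_left (Ideal.pow_le_pow_right (Finset.le_sup hP))
    _ = (𝔟 ^ k P • (⊤ : Submodule S P)).map P.subtype := by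
        rw [Submodule.map_smul'', Submodule.map_subtype_top]
    _ ≤ (LinearMap.range (LinearMap.lsmul S P x)).map P.subtype := Submodule.map_mono (hk P hP)
    _ ≤ LinearMap.range (LinearMap.lsmul S A x) := by
        rintro _ ⟨_, ⟨z, rfl⟩, rfl⟩
        exact ⟨z, rfl⟩

end Secondary

section Localization

variable {R : Type*} [CommRing R] {N : Type*} [AddCommGroup N] [Module R N]

theorem mk_mem_range_localizedModuleMap {S : Submonoid R} {A : Type*} [AddCommGroup A] [Module R A]
    {f : A →ₗ[R] N} {z : N} (h : ∃ s ∈ S, s • z ∈ LinearMap.range f) (t : S) :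
    LocalizedModule.mk z t ∈ LinearMap.range (LocalizedModule.map S f) := by
  obtain ⟨s, hs, a, ha⟩ := h
  refine ⟨LocalizedModule.mk a (⟨s, hs⟩ * t), ?_⟩
  rw [LocalizedModule.map_mk, ha]
  exact LocalizedModule.mk_cancel_common_left ⟨s, hs⟩ t z

theorem FiniteOutside.finite_localizedModule {W : Set (PrimeSpectrum R)} (h : FiniteOutside W N)
    {p : PrimeSpectrum R} (hp : p ∉ W) :
    Module.Finite (Localization.AtPrime p.asIdeal)
      (LocalizedModule p.asIdeal.primeCompl N) := by
  obtain ⟨G, hG, h⟩ := finiteOutside_iff.1 h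
  have : Module.Finite R G := Module.Finite.iff_fg.2 hG
  refine .of_surjective (LocalizedModule.map p.asIdeal.primeCompl G.subtype) fun z => ?_
  induction z using LocalizedModule.induction_on with | h z t =>
  exact mk_mem_range_localizedModuleMap (by simpa using h p hp z) t

theorem exists_mul_pow_smul_eq_zero_of_minimal_support {p : PrimeSpectrum R}
    (hp : Minimal (· ∈ Module.support R N) p) {r : R} (hr : r ∈ p.asIdeal) (z : N) :
    ∃ k : ℕ, ∃ s ∉ p.asIdeal, (s * r ^ k) • z = 0 := by
  by_contra! h
  obtain ⟨q, hq, hzq, hdisj⟩ := Ideal.exists_le_prime_disjoint (Module.annihilator R (R ∙ z))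
    (p.asIdeal.primeCompl ⊔ Submonoid.powers r) (Set.disjoint_left.2 fun x hx hx' => by
      obtain ⟨s, hs, _, ⟨k, rfl⟩, rfl⟩ := Submonoid.mem_sup.1 hx'
      exact h k s hs (by simpa [Submodule.mem_annihilator_span_singleton] using hx))
  have hqp : q ≤ p.asIdeal := fun x hx => by_contra fun hxp =>
    Set.disjoint_left.1 hdisj hx (Submonoid.mem_sup_left hxp)
  have hrq : r ∈ q := hp.2 (y := ⟨q, hq⟩)
    (Module.mem_support_iff_exists_annihilator.2 ⟨z, hzq⟩) hqp hr
  exact Set.disjoint_left.1 hdisj hrq (Submonoid.mem_sup_right (Submonoid.mem_powers r))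

variable {𝔞 : Ideal R} {W : Set (PrimeSpectrum R)} {p : PrimeSpectrum R}

theorem IsPowerTorsion.le_of_mem_support (hN : IsPowerTorsion 𝔞 N)
    (hp : p ∈ Module.support R N) : 𝔞 ≤ p.asIdeal := by
  obtain ⟨z, hz⟩ := Module.mem_support_iff_exists_annihilator.1 hp
  obtain ⟨k, hk⟩ := hN z
  exact Ideal.IsPrime.le_of_pow_le (n := k) fun r hr =>
    hz ((Submodule.mem_annihilator_span_singleton _ _).2 (hk r hr))

theorem minimal_support_of_Ioi_subset (hW : ∀ q ∈ Module.support R N, Set.Ioi q ⊆ W)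
    (hp : p ∈ Module.support R N \ W) : Minimal (· ∈ Module.support R N) p :=
  ⟨hp.1, fun q hq hqp => by_contra fun h => hp.2 (hW q hq (hqp.lt_of_not_ge h))⟩

variable [IsNoetherianRing R]

theorem exists_forall_smul_eq_zero_iff_of_minimal_support
    (hp : Minimal (· ∈ Module.support R N) p) :
    ∃ w : N, ∀ r : R, r • w = 0 ↔ r ∈ p.asIdeal := by
  obtain ⟨z, hz⟩ := Module.mem_support_iff_exists_annihilator.1 hp.1
  have hmin : p.asIdeal ∈ (Module.annihilator R (R ∙ z)).minimalPrimes :=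
    ⟨⟨p.isPrime, hz⟩, fun q hq hqp => hp.2 (y := ⟨q, hq.1⟩)
      (Module.mem_support_iff_exists_annihilator.2 ⟨z, hq.2⟩) hqp⟩
  obtain ⟨-, w, hw⟩ := (Submodule.isAssociatedPrime_iff (N := (⊥ : Submodule R (R ∙ z)))).1
    (Module.associatedPrimes.minimalPrimes_annihilator_subset_associatedPrimes R _ hmin)
  refine ⟨w, fun r => ?_⟩
  rw [hw, Submodule.mem_colon_singleton]
  simp [Subtype.ext_iff]

theorem exists_forall_smul_smul_mem {I : Ideal R} {Y : Submodule R N} {z : N}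
    (h : ∀ r ∈ I, ∃ s ∉ p.asIdeal, s • r • z ∈ Y) :
    ∃ s ∉ p.asIdeal, ∀ r ∈ I, s • r • z ∈ Y := by
  classical
  obtain ⟨S, hS⟩ := I.fg_of_isNoetherianRing
  choose! f hf hfY using fun r hr => h r (hS ▸ Ideal.subset_span hr : r ∈ I)
  refine ⟨∏ r ∈ S, f r, prod_mem (S := p.asIdeal.primeCompl) hf, fun r hr => ?_⟩
  rw [← hS] at hr
  induction hr using Submodule.span_induction with
  | mem x hx =>
    rw [← Finset.mul_prod_erase S f hx, mul_comm, mul_smul]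
    exact Y.smul_mem _ (hfY x hx)
  | zero => simp
  | add x y _ _ hx hy => rw [add_smul, smul_add]; exact add_mem hx hy
  | smul a x _ hx =>
    rw [smul_eq_mul, mul_smul, smul_comm]
    exact Y.smul_mem _ hx

theorem exists_smul_mem_torsionBySet_of_mk_mem {z : N} {t : p.asIdeal.primeCompl}
    (hz : LocalizedModule.mk z t ∈ Submodule.torsionBySet (Localization.AtPrime p.asIdeal)
      (LocalizedModule p.asIdeal.primeCompl N)
      (IsLocalRing.maximalIdeal (Localization.AtPrime p.asIdeal))) :
    ∃ s ∉ p.asIdeal, s • z ∈ Submodule.torsionBySet R N (p.asIdeal : Set R) := by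
  obtain ⟨s, hs, hsz⟩ := exists_forall_smul_smul_mem (I := p.asIdeal) (p := p)
    (Y := (⊥ : Submodule R N)) (z := z) fun r hr => by
      have := mem_torsionBySet_ideal.1 hz (algebraMap R _ r)
        ((IsLocalization.AtPrime.to_map_mem_maximal_iff _ p.asIdeal r).2 hr)
      rw [algebraMap_smul, LocalizedModule.smul'_mk, ← LocalizedModule.zero_mk t,
        LocalizedModule.mk_eq] at this
      obtain ⟨u, hu⟩ := this
      exact ⟨u * t, (u * t).2, by simpa [mul_smul, Submonoid.smul_def] using hu⟩
  exact ⟨s, hs, mem_torsionBySet_ideal.2 fun r hr => by rw [smul_comm]; exact hsz r hr⟩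

theorem isArtinian_localizedModule (hp : Minimal (· ∈ Module.support R N) p) (hap : 𝔞 ≤ p.asIdeal)
    (hpW : p ∉ W) (h : FiniteOutside W (Submodule.torsionBySet R N (𝔞 : Set R))) :
    IsArtinian (Localization.AtPrime p.asIdeal) (LocalizedModule p.asIdeal.primeCompl N) := by
  let T := Submodule.torsionBySet R N (𝔞 : Set R)
  have : IsNoetherianRing (Localization.AtPrime p.asIdeal) :=
    IsLocalization.isNoetherianRing p.asIdeal.primeCompl _ inferInstance
  have := h.finite_localizedModule hpW
  have : Module.Finite (Localization.AtPrime p.asIdeal) (Submodule.torsionBySet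
      (Localization.AtPrime p.asIdeal) (LocalizedModule p.asIdeal.primeCompl N)
      (IsLocalRing.maximalIdeal (Localization.AtPrime p.asIdeal))) := by
    refine Module.Finite.iff_fg.2 (.of_le (T := LinearMap.range (LocalizedModule.map
      p.asIdeal.primeCompl T.subtype)) (Module.Finite.iff_fg.1 inferInstance) fun z hz => ?_)
    induction z using LocalizedModule.induction_on with | h z t =>
    obtain ⟨s, hs, hsz⟩ := exists_smul_mem_torsionBySet_of_mk_mem hz
    exact mk_mem_range_localizedModuleMap ⟨s, hs, ⟨s • z,
      Submodule.torsionBySet_le_torsionBySet_of_subset hap hsz⟩, rfl⟩ t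
  refine isArtinian_of_finite_torsionBySet_maximalIdeal fun y hy z => ?_
  induction z using LocalizedModule.induction_on with | h z t =>
  obtain ⟨r, u, rfl⟩ := IsLocalization.exists_mk'_eq p.asIdeal.primeCompl y
  have hr : r ∈ p.asIdeal := (IsLocalization.AtPrime.mk'_mem_maximal_iff _ p.asIdeal r u).1 hy
  obtain ⟨k, s, hs, hk⟩ := exists_mul_pow_smul_eq_zero_of_minimal_support hp hr z
  refine ⟨k, ?_⟩
  rw [← Localization.mk_eq_mk', Localization.mk_pow, LocalizedModule.mk_smul_mk,
    ← LocalizedModule.zero_mk 1, LocalizedModule.mk_eq]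
  exact ⟨⟨s, hs⟩, by simpa [Submonoid.smul_def, mul_smul] using hk⟩

theorem finite_support_diff (hN : IsPowerTorsion 𝔞 N)
    (hW : ∀ q ∈ Module.support R N, Set.Ioi q ⊆ W)
    (h : FiniteOutside W (Submodule.torsionBySet R N (𝔞 : Set R))) :
    (Module.support R N \ W).Finite := by
  obtain ⟨G, hG, h⟩ := finiteOutside_iff.1 h
  have : Module.Finite R G := Module.Finite.iff_fg.2 hG
  refine .of_finite_image ((Module.annihilator R G).finite_minimalPrimes_of_isNoetherianRing.subset
    ?_) fun p _ q _ e => PrimeSpectrum.ext e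
  rintro _ ⟨p, hp, rfl⟩
  have hmin := minimal_support_of_Ioi_subset hW hp
  obtain ⟨w, hw⟩ := exists_forall_smul_eq_zero_iff_of_minimal_support hmin
  have hwT : w ∈ Submodule.torsionBySet R N (𝔞 : Set R) :=
    mem_torsionBySet_ideal.2 fun r hr => (hw r).2 (hN.le_of_mem_support hp.1 hr)
  obtain ⟨s, hs, hsG⟩ := h p hp.2 ⟨w, hwT⟩
  refine ⟨⟨p.isPrime, fun r hr => ?_⟩, fun q hq hqp => hmin.2 (y := ⟨q, hq.1⟩) ?_ hqp⟩
  · have := congrArg (fun g : G => (g.1 : N)) (Module.mem_annihilator.1 hr ⟨_, hsG⟩)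
    have : (r * s) • w = 0 := by simpa [mul_smul] using this
    exact (p.isPrime.mem_or_mem ((hw _).1 this)).resolve_right hs
  · refine Module.support_subset_of_injective (Submodule.subtype _ ∘ₗ G.subtype)
      (Subtype.val_injective.comp Subtype.val_injective) ?_
    rw [Module.support_eq_zeroLocus]
    exact hq.2

end Localization

section SocleCriterion

variable {R : Type*} [CommRing R] {N : Type*} [AddCommGroup N] [Module R N]
  {𝔞 : Ideal R} {W W' : Set (PrimeSpectrum R)} {p : PrimeSpectrum R}

theorem exists_pow_smul_smul_sub_eq_zero [IsArtinian (Localization.AtPrime p.asIdeal)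
      (LocalizedModule p.asIdeal.primeCompl N)] (x : R) :
    ∃ k : ℕ, ∀ z : N, ∃ s ∉ p.asIdeal, ∃ z' : N, x ^ k • (s • z - x • z') = 0 := by
  let f : Module.End (Localization.AtPrime p.asIdeal) (LocalizedModule p.asIdeal.primeCompl N) :=
    LinearMap.lsmul _ _ (algebraMap R _ x)
  have hf (k : ℕ) : f ^ k = LinearMap.lsmul _ _ (algebraMap R _ (x ^ k)) := by
    rw [map_pow]
    exact (map_pow (Module.toModuleEnd _ _) (algebraMap R _ x) k).symm
  obtain ⟨k, hk, hk0⟩ := (f.eventually_codisjoint_ker_pow_range_pow.and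
    (Filter.eventually_ne_atTop 0)).exists
  obtain ⟨l, rfl⟩ := Nat.exists_eq_succ_of_ne_zero hk0
  refine ⟨l + 1, fun z => ?_⟩
  obtain ⟨a, ha, _, ⟨b, rfl⟩, hab⟩ := Submodule.mem_sup.1
    (hk.eq_top ▸ Submodule.mem_top : LocalizedModule.mk z 1 ∈ _ ⊔ _)
  have h : (f ^ (l + 1)) (LocalizedModule.mk z 1) = (f ^ (l + 1)) ((f ^ (l + 1)) b) := by
    rw [← hab, map_add, LinearMap.mem_ker.1 ha, zero_add]
  induction b using LocalizedModule.induction_on with | h b t =>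
  simp only [hf, LinearMap.lsmul_apply, algebraMap_smul, LocalizedModule.smul'_mk] at h
  obtain ⟨u, hu⟩ := LocalizedModule.mk_eq.1 h
  refine ⟨u * t, (u * t).2, (u : R) • x ^ l • b, ?_⟩
  rw [smul_sub, sub_eq_zero]
  simp only [one_smul, Submonoid.smul_def, ← mul_smul] at hu ⊢
  convert hu using 2 <;> ring

variable [IsNoetherianRing R]

theorem holdsGenerically_exists_smul_smul_mem_range [IsArtinian (Localization.AtPrime p.asIdeal)
      (LocalizedModule p.asIdeal.primeCompl N)] (𝔞 : Ideal R) :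
    HoldsGenerically 𝔞 fun x => ∃ k : ℕ, ∀ y ∈ 𝔞 ^ k, ∀ z : N, ∃ s ∉ p.asIdeal,
      s • y • z ∈ LinearMap.range (LinearMap.lsmul R N x) := by
  have : IsNoetherianRing (Localization.AtPrime p.asIdeal) :=
    IsLocalization.isNoetherianRing p.asIdeal.primeCompl _ inferInstance
  refine (holdsGenerically_pow_smul_top_le_range
    (A := LocalizedModule p.asIdeal.primeCompl N)
    (𝔞.map (algebraMap R (Localization.AtPrime p.asIdeal)))).comap.mp ?_
  rintro x - ⟨k, hk⟩
  refine ⟨k, fun y hy z => ?_⟩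
  have hy' := Ideal.mem_map_of_mem (algebraMap R (Localization.AtPrime p.asIdeal)) hy
  rw [Ideal.map_pow] at hy'
  obtain ⟨w, hw⟩ :=
    hk (Submodule.smul_mem_smul hy' (Submodule.mem_top (x := LocalizedModule.mk z 1)))
  induction w using LocalizedModule.induction_on with | h w t =>
  rw [LinearMap.lsmul_apply, algebraMap_smul, algebraMap_smul, LocalizedModule.smul'_mk,
    LocalizedModule.smul'_mk, LocalizedModule.mk_eq] at hw
  obtain ⟨u, hu⟩ := hw
  refine ⟨u * t, (u * t).2, (u : R) • w, ?_⟩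
  rw [one_smul] at hu
  simp only [Submonoid.smul_def] at hu
  rw [mul_smul, ← hu, LinearMap.lsmul_apply, smul_comm]

theorem exists_uniform_pow_smul_smul_sub_eq_zero (hN : IsPowerTorsion 𝔞 N)
    (hW : ∀ q ∈ Module.support R N, Set.Ioi q ⊆ W)
    (h : FiniteOutside W (Submodule.torsionBySet R N (𝔞 : Set R))) (x : R) :
    ∃ k : ℕ, ∀ p ∉ W, ∀ z : N, ∃ s ∉ p.asIdeal, ∃ z' : N, x ^ k • (s • z - x • z') = 0 := by
  have hfin := finite_support_diff hN hW h
  have key : ∀ p ∈ Module.support R N \ W, ∃ k : ℕ, ∀ z : N, ∃ s ∉ p.asIdeal, ∃ z' : N,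
      x ^ k • (s • z - x • z') = 0 := fun p hp =>
    have := isArtinian_localizedModule (minimal_support_of_Ioi_subset hW hp)
      (hN.le_of_mem_support hp.1) hp.2 h
    exists_pow_smul_smul_sub_eq_zero x
  choose! k hk using key
  refine ⟨hfin.toFinset.sup k, fun p hp z => ?_⟩
  by_cases hpN : p ∈ Module.support R N
  · obtain ⟨s, hs, z', e⟩ := hk p ⟨hpN, hp⟩ z
    refine ⟨s, hs, z', ?_⟩
    rw [← Nat.sub_add_cancel (Finset.le_sup (f := k) (hfin.mem_toFinset.2 ⟨hpN, hp⟩)), pow_add,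
      mul_smul, e, smul_zero]
  · obtain ⟨s, hs, e⟩ := Module.notMem_support_iff'.1 hpN z
    exact ⟨s, hs, 0, by rw [e, smul_zero, sub_zero, smul_zero]⟩

theorem holdsGenerically_exists_uniform_smul_smul_mem_range (hN : IsPowerTorsion 𝔞 N)
    (hW : ∀ q ∈ Module.support R N, Set.Ioi q ⊆ W)
    (h : FiniteOutside W (Submodule.torsionBySet R N (𝔞 : Set R))) :
    HoldsGenerically 𝔞 fun x => ∃ k : ℕ, ∀ p ∉ W, ∀ y ∈ 𝔞 ^ k, ∀ z : N, ∃ s ∉ p.asIdeal,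
      s • y • z ∈ LinearMap.range (LinearMap.lsmul R N x) := by
  have hfin := finite_support_diff hN hW h
  refine (HoldsGenerically.forall_mem hfin fun p hp =>
    have := isArtinian_localizedModule (minimal_support_of_Ioi_subset hW hp)
      (hN.le_of_mem_support hp.1) hp.2 h
    holdsGenerically_exists_smul_smul_mem_range (N := N) (p := p) 𝔞).mp fun x _ hx => ?_
  choose! k hk using hx
  refine ⟨hfin.toFinset.sup k, fun p hp y hy z => ?_⟩
  by_cases hpN : p ∈ Module.support R N
  · exact hk p ⟨hpN, hp⟩ y (Ideal.pow_le_pow_right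
      (Finset.le_sup (f := k) (hfin.mem_toFinset.2 ⟨hpN, hp⟩)) hy) z
  · obtain ⟨s, hs, e⟩ := Module.notMem_support_iff'.1 hpN (y • z)
    exact ⟨s, hs, e ▸ zero_mem _⟩

theorem SoclesFiniteOutside.of_torsionBy_of_support_subset {x : R} (hx : x ∈ 𝔞)
    (hN : IsPowerTorsion 𝔞 N) (hW : ∀ q ∈ Module.support R N, Set.Ioi q ⊆ W)
    (h : SoclesFiniteOutside W 𝔞 (Submodule.torsionBy R N x)) : SoclesFiniteOutside W 𝔞 N := by
  intro Y
  have hS : FiniteOutside W (Submodule.torsionBySet R N (𝔞 : Set R)) := by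
    refine .of_surjective (torsionBySetMap 𝔞 (Submodule.torsionBy R N x).subtype) ?_ h.torsionBySet
    rintro ⟨z, hz⟩
    rw [mem_torsionBySet_ideal] at hz
    exact ⟨⟨⟨z, hz x hx⟩, mem_torsionBySet_ideal.2 fun r hr => Subtype.ext (hz r hr)⟩, rfl⟩
  let Z : Submodule R N := (Submodule.torsionBySet R (N ⧸ Y) (𝔞 : Set R)).comap Y.mkQ
  have hZ (z : N) : z ∈ Z ↔ ∀ r ∈ 𝔞, r • z ∈ Y := by
    simp only [Z, Submodule.mem_comap, mem_torsionBySet_ideal, Submodule.mkQ_apply,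
      ← Submodule.Quotient.mk_smul, Submodule.Quotient.mk_eq_zero]
  obtain ⟨K, hK⟩ := exists_uniform_pow_smul_smul_sub_eq_zero (N := Z)
    (fun z => (hN z).imp fun _ hk r hr => Subtype.ext (hk r hr))
    (fun q hq => hW q (Module.support_subset_of_injective Z.subtype Z.injective_subtype hq))
    (.of_injective (torsionBySetMap 𝔞 Z.subtype) (torsionBySetMap_injective 𝔞 Z.injective_subtype)
      hS) x
  let T := Submodule.torsionBy R N (x ^ K)
  refine .of_locally_surjective (torsionBySetMap 𝔞 (Submodule.mapQ (Y.comap T.subtype) Y T.subtype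
    le_rfl)) ?_ (h.torsionBy_pow K (Y.comap T.subtype))
  rintro p hp ⟨b, hb⟩
  obtain ⟨z, rfl⟩ := Y.mkQ_surjective b
  obtain ⟨s, hs, z', e⟩ := hK p hp ⟨z, hb⟩
  have hv : (s • z - x • z' : N) ∈ Z := sub_mem (Z.smul_mem s hb) (Z.smul_mem x z'.2)
  refine ⟨s, hs, ⟨Submodule.mkQ _ (⟨s • z - x • z', congrArg Subtype.val e⟩ : T), ?_⟩,
    Subtype.ext ?_⟩
  · rw [mem_torsionBySet_ideal]
    exact fun r hr => (Submodule.Quotient.mk_eq_zero _).2 ((hZ _).1 hv r hr)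
  · refine (Submodule.Quotient.eq Y).2 ?_
    simpa using (hZ z').1 z'.2 x hx

theorem SoclesFiniteOutside.of_torsionBy {x : R} (hx : x ∈ 𝔞) (hN : IsPowerTorsion 𝔞 N)
    (hW : ∀ q ∈ W', Set.Ioi q ⊆ W) (hF : FiniteOutside W' N)
    (h : SoclesFiniteOutside W 𝔞 (Submodule.torsionBy R N x)) : SoclesFiniteOutside W 𝔞 N := by
  obtain ⟨G, hG, hGW⟩ := hF
  have : Module.Finite R G := Module.Finite.iff_fg.2 hG
  let P : Submodule R N := G.comap (LinearMap.lsmul R N x)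
  have hle : Submodule.torsionBy R N x ≤ P := fun z hz => by
    simp [P, (Submodule.mem_torsionBy_iff _ _).1 hz]
  have hP : SoclesFiniteOutside W 𝔞 P := by
    refine .of_exact (Submodule.inclusion hle) ((LinearMap.lsmul R N x).restrict fun z hz => hz)
      (fun z => ⟨fun hz => ⟨⟨z, congrArg Subtype.val hz⟩, rfl⟩, ?_⟩) h .of_finite
    rintro ⟨w, rfl⟩
    exact Subtype.ext w.2
  refine .of_exact G.subtype G.mkQ (LinearMap.exact_subtype_mkQ G) .of_finite
    (of_torsionBy_of_support_subset hx (hN.quotient G) (fun q hq => hW q (hGW hq))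
      (.of_surjective (G.mkQ.restrict fun z hz => (Submodule.Quotient.mk_eq_zero _).2 hz) ?_ hP))
  rintro ⟨z, hz⟩
  obtain ⟨z, rfl⟩ := G.mkQ_surjective z
  exact ⟨⟨z, (Submodule.Quotient.mk_eq_zero G).1 hz⟩, rfl⟩

theorem SoclesFiniteOutside.holdsGenerically_of_support_subset (hN : IsPowerTorsion 𝔞 N)
    (hW : ∀ q ∈ Module.support R N, Set.Ioi q ⊆ W) (h : SoclesFiniteOutside W 𝔞 N) :
    HoldsGenerically 𝔞 fun x =>
      FiniteOutside W (N ⧸ LinearMap.range (LinearMap.lsmul R N x)) := by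
  refine (holdsGenerically_exists_uniform_smul_smul_mem_range hN hW h.torsionBySet).mp ?_
  rintro x - ⟨k, hk⟩
  refine .of_locally_surjective (Submodule.subtype _) (fun p hp b => ?_)
    ((h.quotient (LinearMap.range (LinearMap.lsmul R N x))).torsionBySet.torsionBySet_pow k)
  obtain ⟨z, rfl⟩ := Submodule.mkQ_surjective _ b
  obtain ⟨s, hs, hsz⟩ := exists_forall_smul_smul_mem fun y hy => hk p hp y hy z
  refine ⟨s, hs, ⟨s • Submodule.mkQ _ z, mem_torsionBySet_ideal.2 fun y hy => ?_⟩, rfl⟩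
  rw [smul_comm, ← map_smul, ← map_smul]
  exact (Submodule.Quotient.mk_eq_zero _).2 (hsz y hy)

theorem SoclesFiniteOutside.holdsGenerically (hN : IsPowerTorsion 𝔞 N)
    (hW : ∀ q ∈ W', Set.Ioi q ⊆ W) (hF : FiniteOutside W' N) (h : SoclesFiniteOutside W 𝔞 N) :
    HoldsGenerically 𝔞 fun x =>
      FiniteOutside W (N ⧸ LinearMap.range (LinearMap.lsmul R N x)) := by
  obtain ⟨G, hG, hGW⟩ := hF
  have : Module.Finite R G := Module.Finite.iff_fg.2 hG
  refine ((h.quotient G).holdsGenerically_of_support_subset (hN.quotient G)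
    fun q hq => hW q (hGW hq)).mp fun x _ hx => ?_
  let Y := LinearMap.range (LinearMap.lsmul R N x)
  have hY : Y.map G.mkQ = LinearMap.range (LinearMap.lsmul R (N ⧸ G) x) := by
    rw [← LinearMap.range_comp, ← LinearMap.range_comp_of_range_eq_top _ G.range_mkQ]
    rfl
  refine .of_exact (Y.mkQ ∘ₗ G.subtype) (Y.mapQ _ G.mkQ (Submodule.le_comap_map _ _)) ?_ .of_finite
    (hY ▸ hx)
  rw [LinearMap.exact_iff, Submodule.ker_mapQ, Submodule.comap_map_eq, Submodule.map_sup,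
    Submodule.mkQ_map_self, bot_sup_eq, Submodule.ker_mkQ, LinearMap.range_comp,
    Submodule.range_subtype]

end SocleCriterion

theorem finite_of_exact {R A B C : Type*} [CommRing R] [IsNoetherianRing R] [AddCommGroup A]
    [Module R A] [AddCommGroup B] [Module R B] [AddCommGroup C] [Module R C] {f : A →ₗ[R] B}
    {g : B →ₗ[R] C} (hfg : Function.Exact f g) [Module.Finite R A] [Module.Finite R C] :
    Module.Finite R B :=
  have := isNoetherian_of_range_eq_ker f g (LinearMap.exact_iff.1 hfg).symm
  inferInstance

theorem finite_of_finite_torsionBy {R A : Type*} [CommRing R] [IsNoetherianRing R]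
    [AddCommGroup A] [Module R A] {x : R} [hx : Module.Finite R (Submodule.torsionBy R A x)]
    {k : ℕ} (hk : ∀ z : A, x ^ k • z = 0) : Module.Finite R A := by
  suffices ∀ k, Module.Finite R (LinearMap.lsmul R A (x ^ k)).ker by
    have h := this k
    rw [show LinearMap.lsmul R A (x ^ k) = 0 from LinearMap.ext hk, LinearMap.ker_zero] at h
    exact .of_surjective _ (Submodule.topEquiv (R := R) (M := A)).surjective
  intro k
  induction k with
  | zero =>
    rw [pow_zero, LinearMap.ker_eq_bot.2 fun a b h => by simpa using h]
    infer_instance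
  | succ k ih =>
    let f : Submodule.torsionBy R A x →ₗ[R] (LinearMap.lsmul R A (x ^ (k + 1))).ker :=
      Submodule.inclusion fun z hz => by
        simp [pow_succ, mul_smul, (Submodule.mem_torsionBy_iff _ _).1 hz]
    let g : (LinearMap.lsmul R A (x ^ (k + 1))).ker →ₗ[R] (LinearMap.lsmul R A (x ^ k)).ker :=
      (LinearMap.lsmul R A x).restrict fun z hz => by
        have : x ^ (k + 1) • z = 0 := hz
        simpa [pow_succ, mul_smul, smul_comm (x ^ k) x] using this
    refine finite_of_exact (f := f) (g := g) fun z => ⟨fun hz => ?_, ?_⟩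
    · exact ⟨⟨z, congrArg Subtype.val hz⟩, rfl⟩
    · rintro ⟨z, rfl⟩
      exact Subtype.ext z.2

theorem int_induction_of_neg {P : ℤ → Prop} (neg : ∀ i < 0, P i) (succ : ∀ i, P i → P (i + 1))
    (i : ℤ) : P i := by
  rcases lt_or_ge i 0 with h | h
  · exact neg i h
  · exact Int.leInduction (m := -1) (neg _ (by lia)) (fun i _ => succ i) i (by lia)

section Pretriangulated

open Limits Pretriangulated

variable {R : Type*} [CommRing R] {𝒟 : Type*} [Category 𝒟] [Preadditive 𝒟] [HasZeroObject 𝒟]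
  [HasShift 𝒟 ℤ] [∀ n : ℤ, (shiftFunctor 𝒟 n).Additive] [Pretriangulated 𝒟] [Linear R 𝒟]

/-- `K` is a fiber of the multiplication by `x` on `X`. -/
def IsFiberSMul (x : R) (X K : 𝒟) : Prop :=
  ∃ (f : K ⟶ X) (g : X ⟶ K⟦(1 : ℤ)⟧), Triangle.mk f (x • 𝟙 X) g ∈ distTriang 𝒟

variable (𝒟) in
/-- A functor from an abelian category to a pretriangulated category which sends short exact
sequences to distinguished triangles, such as the inclusion of an abelian category in its derived
category. -/
def IsTriangleValued {C : Type*} [Category C] [HasZeroMorphisms C] (S : C ⥤ 𝒟) : Prop :=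
  ∀ T : ShortComplex C, T.ShortExact → ∃ h : S.obj T.X₃ ⟶ (S.obj T.X₁)⟦(1 : ℤ)⟧,
    Triangle.mk (S.map T.f) (S.map T.g) h ∈ distTriang 𝒟

theorem exists_isFiberSMul (x : R) (X : 𝒟) : ∃ K : 𝒟, IsFiberSMul x X K :=
  distinguished_cocone_triangle₁ (x • 𝟙 X)

variable [∀ n : ℤ, (shiftFunctor 𝒟 n).Linear R]

theorem IsFiberSMul.exists_exact {x : R} {X K : 𝒟} (h : IsFiberSMul x X K) (A : 𝒟) (i : ℤ) :
    ∃ (δ : (A ⟶ X⟦i - 1⟧) →ₗ[R] (A ⟶ K⟦i⟧)) (φ : (A ⟶ K⟦i⟧) →ₗ[R] (A ⟶ X⟦i⟧)),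
      Function.Exact (LinearMap.lsmul R (A ⟶ X⟦i - 1⟧) x) δ ∧ Function.Exact δ φ ∧
        Function.Exact φ (LinearMap.lsmul R (A ⟶ X⟦i⟧) x) := by
  obtain ⟨f, g, hT⟩ := h
  let T := Triangle.mk f (x • 𝟙 X) g
  have hx (i : ℤ) : Linear.rightComp R A ((x • 𝟙 X)⟦i⟧') = LinearMap.lsmul R (A ⟶ X⟦i⟧) x := by
    ext z
    simp [Functor.map_smul]
  have hδ (z : A ⟶ X⟦i - 1⟧) :
      (preadditiveCoyoneda.obj (Opposite.op A)).homologySequenceδ T (i - 1) i (by lia) z =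
        z ≫ g⟦i - 1⟧' ≫ (shiftFunctorAdd' 𝒟 1 (i - 1) i (by lia)).inv.app K :=
    preadditiveCoyoneda_homologySequenceδ_apply T (i - 1) i (by lia) (A := Opposite.op A) z
  have h₃ := (preadditiveCoyoneda.obj (Opposite.op A)).homologySequence_exact₃ T hT (i - 1) i
    (by lia)
  have h₁ := (preadditiveCoyoneda.obj (Opposite.op A)).homologySequence_exact₁ T hT (i - 1) i
    (by lia)
  have h₂ := (preadditiveCoyoneda.obj (Opposite.op A)).homologySequence_exact₂ T hT i
  rw [ShortComplex.ab_exact_iff_function_exact] at h₁ h₂ h₃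
  refine ⟨Linear.rightComp R A (g⟦i - 1⟧' ≫ (shiftFunctorAdd' 𝒟 1 (i - 1) i (by lia)).inv.app K),
    Linear.rightComp R A (f⟦i⟧'), ?_, ?_, ?_⟩
  · rw [← hx]
    exact fun z => Iff.trans (Eq.congr_left (hδ z).symm) (h₃ z)
  · exact fun z => Iff.trans (h₁ z) (exists_congr fun w => Eq.congr_left (hδ w))
  · rw [← hx]
    exact h₂

theorem IsFiberSMul.finite_hom [IsNoetherianRing R] {x : R} {X K : 𝒟} (h : IsFiberSMul x X K)
    (A : 𝒟) (i : ℤ) [Module.Finite R (A ⟶ X⟦i - 1⟧)] [Module.Finite R (A ⟶ X⟦i⟧)] :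
    Module.Finite R (A ⟶ K⟦i⟧) := by
  obtain ⟨δ, φ, -, hδφ, -⟩ := h.exists_exact A i
  exact finite_of_exact hδφ

theorem IsFiberSMul.finite_hom_of_pow_smul_eq_zero [IsNoetherianRing R] {x : R} {X K : 𝒟}
    (h : IsFiberSMul x X K) (A : 𝒟) (i : ℤ) [Module.Finite R (A ⟶ K⟦i⟧)] {k : ℕ}
    (hk : ∀ z : A ⟶ X⟦i⟧, x ^ k • z = 0) : Module.Finite R (A ⟶ X⟦i⟧) := by
  obtain ⟨δ, φ, -, -, hφ⟩ := h.exists_exact A i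
  have : Module.Finite R (Submodule.torsionBy R (A ⟶ X⟦i⟧) x) := by
    rw [show Submodule.torsionBy R _ x = LinearMap.range φ from LinearMap.exact_iff.1 hφ]
    infer_instance
  exact finite_of_finite_torsionBy hk

variable {C : Type*} [Category C] [HasZeroMorphisms C] {S : C ⥤ 𝒟}

theorem IsTriangleValued.exists_exact (hS : IsTriangleValued 𝒟 S) {T : ShortComplex C}
    (hT : T.ShortExact) (X : 𝒟) (i : ℤ) :
    ∃ δ : (S.obj T.X₁ ⟶ X⟦i⟧) →ₗ[R] (S.obj T.X₃ ⟶ X⟦i + 1⟧),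
      Function.Exact δ (Linear.leftComp R (X⟦i + 1⟧) (S.map T.g)) ∧
        Function.Exact (Linear.leftComp R (X⟦i + 1⟧) (S.map T.g))
          (Linear.leftComp R (X⟦i + 1⟧) (S.map T.f)) := by
  obtain ⟨h, hT⟩ := hS T hT
  refine ⟨{ toFun := fun z => h ≫ z⟦(1 : ℤ)⟧' ≫ (shiftFunctorAdd' 𝒟 i 1 _ rfl).inv.app X
            map_add' := by simp
            map_smul' := by simp [Functor.map_smul] },
    fun z => ⟨fun hz => ?_, ?_⟩, fun z => ⟨fun hz => ?_, ?_⟩⟩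
  · obtain ⟨w, rfl⟩ : ∃ w : (S.obj T.X₁)⟦(1 : ℤ)⟧ ⟶ X⟦i + 1⟧, z = h ≫ w :=
      Triangle.yoneda_exact₃ _ hT z hz
    obtain ⟨w', hw'⟩ := (shiftFunctor 𝒟 (1 : ℤ)).map_surjective
      (w ≫ (shiftFunctorAdd' 𝒟 i 1 _ rfl).hom.app X)
    exact ⟨w', by simp [hw']⟩
  · rintro ⟨w, rfl⟩
    have : S.map T.g ≫ h = 0 := comp_distTriang_mor_zero₂₃ _ hT
    simp [reassoc_of% this]
  · obtain ⟨w, rfl⟩ := Triangle.yoneda_exact₂ _ hT z hz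
    exact ⟨w, rfl⟩
  · rintro ⟨w, rfl⟩
    have : S.map T.f ≫ S.map T.g = 0 := comp_distTriang_mor_zero₁₂ _ hT
    simp [reassoc_of% this]

end Pretriangulated

section Linear

theorem shortExact_moduleCat {R : Type*} [CommRing R] {A B C : Type u} [AddCommGroup A]
    [Module R A] [AddCommGroup B]
    [Module R B] [AddCommGroup C] [Module R C] {f : A →ₗ[R] B} {g : B →ₗ[R] C}
    (hfg : Function.Exact f g) (hf : Function.Injective f) (hg : Function.Surjective g) :
    (ShortComplex.mk (ModuleCat.ofHom f) (ModuleCat.ofHom g)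
      (by ext z; exact hfg.apply_apply_eq_zero z)).ShortExact where
  exact := (ShortComplex.ShortExact.moduleCat_exact_iff_function_exact _).2 hfg
  mono_f := (ModuleCat.mono_iff_injective _).2 hf
  epi_g := (ModuleCat.epi_iff_surjective _).2 hg

variable {R : Type u} [CommRing R] {𝒟 : Type*} [Category 𝒟] [Preadditive 𝒟]
  {S : ModuleCat.{u} R ⥤ 𝒟} [S.Additive]

theorem smul_hom_eq_zero [Linear R 𝒟] [S.Linear R] {L : Type u} [AddCommGroup L] [Module R L]
    {r : R} (hr : r ∈ Module.annihilator R L) {Y : 𝒟} (f : S.obj (ModuleCat.of R L) ⟶ Y) :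
    r • f = 0 := by
  have : r • 𝟙 (ModuleCat.of R L) = 0 := by
    ext z
    exact Module.mem_annihilator.1 hr z
  rw [← Category.id_comp f, ← Linear.smul_comp, ← S.map_id, ← S.map_smul, this, S.map_zero,
    Limits.zero_comp]

theorem eq_zero_of_forall_map_comp_eq_zero {n : ℕ} {Y : 𝒟}
    (f : S.obj (ModuleCat.of R (Fin n → R)) ⟶ Y)
    (hf : ∀ g : R →ₗ[R] (Fin n → R), S.map (ModuleCat.ofHom g) ≫ f = 0) : f = 0 := by
  have : 𝟙 (ModuleCat.of R (Fin n → R)) = ∑ i, ModuleCat.ofHom (LinearMap.proj i) ≫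
      ModuleCat.ofHom (LinearMap.single R (fun _ : Fin n => R) i) := by
    refine ModuleCat.hom_ext (LinearMap.ext fun z => ?_)
    simp [ModuleCat.hom_sum, LinearMap.sum_apply, Finset.univ_sum_single]
  rw [← Category.id_comp f, ← S.map_id, this, S.map_sum, Preadditive.sum_comp]
  exact Finset.sum_eq_zero fun i _ => by rw [S.map_comp, Category.assoc, hf, Limits.comp_zero]

end Linear

/-- For `S` the inclusion of an abelian category in its derived category, this says that the
cohomology of `X` vanishes in negative degrees; it is what starts the inductions on the degree. -/
def IsCoconnective {C : Type*} [Category C] {𝒟 : Type*} [Category 𝒟] [HasShift 𝒟 ℤ]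
    (S : C ⥤ 𝒟) (X : 𝒟) : Prop :=
  ∀ (L : C), ∀ i < (0 : ℤ), Subsingleton (S.obj L ⟶ X⟦i⟧)

/-- For an object `X` of the derived category and `S` the inclusion of the modules, the elements
of `R` which annihilate the cohomology `Hom(R, X[i])` of `X` in all degrees. -/
def cohomologyAnnihilator {R : Type u} [CommRing R] {𝒟 : Type*} [Category 𝒟] [Preadditive 𝒟]
    [HasShift 𝒟 ℤ] [Linear R 𝒟] (S : ModuleCat.{u} R ⥤ 𝒟) (X : 𝒟) : Ideal R :=
  ⨅ i : ℤ, Module.annihilator R (S.obj (ModuleCat.of R R) ⟶ X⟦i⟧)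

theorem mem_cohomologyAnnihilator {R : Type u} [CommRing R] {𝒟 : Type*} [Category 𝒟]
    [Preadditive 𝒟] [HasShift 𝒟 ℤ] [Linear R 𝒟] {S : ModuleCat.{u} R ⥤ 𝒟} {X : 𝒟} {r : R} :
    r ∈ cohomologyAnnihilator S X ↔
      ∀ (i : ℤ) (z : S.obj (ModuleCat.of R R) ⟶ X⟦i⟧), r • z = 0 := by
  simp [cohomologyAnnihilator, Module.mem_annihilator]

section FiniteHom

open Limits Pretriangulated

variable {R : Type u} [CommRing R] {𝒟 : Type*} [Category 𝒟] [Preadditive 𝒟]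
  [HasZeroObject 𝒟] [HasShift 𝒟 ℤ] [∀ n : ℤ, (shiftFunctor 𝒟 n).Additive] [Pretriangulated 𝒟]
  [Linear R 𝒟] [∀ n : ℤ, (shiftFunctor 𝒟 n).Linear R] {S : ModuleCat.{u} R ⥤ 𝒟}
  {X K : 𝒟} {x : R}

theorem IsFiberSMul.isCoconnective (hK : IsFiberSMul x X K) (hX : IsCoconnective S X) :
    IsCoconnective S K := by
  intro L i hi
  obtain ⟨δ, φ, -, hδφ, -⟩ := hK.exists_exact (S.obj L) i
  have := hX L i hi
  have := hX L (i - 1) (by lia)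
  refine subsingleton_of_forall_eq 0 fun z => ?_
  obtain ⟨w, rfl⟩ := (hδφ z).1 (Subsingleton.elim _ _)
  rw [Subsingleton.elim w 0, map_zero]

theorem IsFiberSMul.sq_mem_cohomologyAnnihilator (hK : IsFiberSMul x X K) {r : R}
    (hr : r = x ∨ r ∈ cohomologyAnnihilator S X) : r ^ 2 ∈ cohomologyAnnihilator S K := by
  refine mem_cohomologyAnnihilator.2 fun i z => ?_
  obtain ⟨δ, φ, h₁, h₂, h₃⟩ := hK.exists_exact (S.obj (ModuleCat.of R R)) i
  obtain ⟨w, hw⟩ := (h₂ (r • z)).1 <| by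
    rcases hr with rfl | hr
    · exact (map_smul _ _ _).trans ((h₃ _).2 ⟨z, rfl⟩)
    · rw [map_smul, mem_cohomologyAnnihilator.1 hr]
  rw [pow_two, mul_smul, ← hw, ← map_smul]
  rcases hr with rfl | hr
  · exact (h₁ _).2 ⟨w, rfl⟩
  · rw [mem_cohomologyAnnihilator.1 hr, map_zero]

theorem IsFiberSMul.mem_radical (hK : IsFiberSMul x X K) :
    x ∈ (cohomologyAnnihilator S K).radical :=
  ⟨2, hK.sq_mem_cohomologyAnnihilator (.inl rfl)⟩

theorem IsFiberSMul.radical_le (hK : IsFiberSMul x X K) :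
    (cohomologyAnnihilator S X).radical ≤ (cohomologyAnnihilator S K).radical :=
  Ideal.radical_le_radical_iff.2 fun _ hr => ⟨2, hK.sq_mem_cohomologyAnnihilator (.inr hr)⟩

theorem IsFiberSMul.radical_lt (hK : IsFiberSMul x X K)
    (hx : x ∉ (cohomologyAnnihilator S X).radical) :
    (cohomologyAnnihilator S X).radical < (cohomologyAnnihilator S K).radical :=
  SetLike.lt_iff_le_and_exists.2 ⟨hK.radical_le, x, hK.mem_radical, hx⟩

variable [IsNoetherianRing R] [S.Additive] (hS : IsTriangleValued 𝒟 S) {𝔞 : Ideal R}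

include hS in
theorem finite_hom_succ {i : ℤ}
    (h : ∀ (L : Type u) [AddCommGroup L] [Module R L] [Module.Finite R L],
      𝔞 ≤ (Module.annihilator R L).radical →
        Module.Finite R (S.obj (ModuleCat.of R L) ⟶ X⟦i⟧))
    (h𝔞 : Module.Finite R (S.obj (ModuleCat.of R (R ⧸ 𝔞)) ⟶ X⟦i + 1⟧))
    (L : Type u) [AddCommGroup L] [Module R L] [hL : Module.Finite R L] :
    𝔞 ≤ (Module.annihilator R L).radical →
      Module.Finite R (S.obj (ModuleCat.of R L) ⟶ X⟦i + 1⟧) := by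
  induction hL using IsNoetherianRing.induction_on_isQuotientEquivQuotientPrime R with
  | subsingleton N =>
    have : Subsingleton (S.obj (ModuleCat.of R N) ⟶ X⟦i + 1⟧) :=
      ⟨(S.map_isZero (ModuleCat.isZero_of_subsingleton (ModuleCat.of R N))).eq_of_src⟩
    exact fun _ => inferInstance
  | quotient N p e =>
    intro hN
    rw [e.annihilator_eq, Ideal.annihilator_quotient, p.2.radical] at hN
    let g : (R ⧸ 𝔞) →ₗ[R] N := e.symm.toLinearMap ∘ₗ Submodule.factor hN
    have hg : Function.Surjective g := e.symm.surjective.comp (Submodule.factor_surjective hN)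
    have := h (LinearMap.ker g) <| Ideal.annihilator_quotient.ge.trans <|
      (LinearMap.annihilator_le_of_injective _ (Submodule.subtype_injective _)).trans
        Ideal.le_radical
    obtain ⟨δ, hδ, -⟩ := hS.exists_exact (R := R) (shortExact_moduleCat g.exact_subtype_ker_map
      (Submodule.subtype_injective _) hg) X i
    exact finite_of_exact hδ
  | exact N₁ N₂ N₃ f g hf hg hfg h₁ h₃ =>
    intro hN
    have := h₁ (hN.trans (Ideal.radical_mono (LinearMap.annihilator_le_of_injective f hf)))
    have := h₃ (hN.trans (Ideal.radical_mono (LinearMap.annihilator_le_of_surjective g hg)))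
    obtain ⟨_, -, h⟩ := hS.exists_exact (R := R) (shortExact_moduleCat hfg hf hg) X i
    exact finite_of_exact h

include hS in
theorem finite_hom_of_finite_hom_quotient (hX : IsCoconnective S X) {j : ℤ}
    (h : ∀ i ≤ j, Module.Finite R (S.obj (ModuleCat.of R (R ⧸ 𝔞)) ⟶ X⟦i⟧)) {i : ℤ} (hi : i ≤ j)
    (L : Type u) [AddCommGroup L] [Module R L] [Module.Finite R L]
    (hL : 𝔞 ≤ (Module.annihilator R L).radical) :
    Module.Finite R (S.obj (ModuleCat.of R L) ⟶ X⟦i⟧) := by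
  induction i using int_induction_of_neg generalizing L with
  | neg i h0 =>
    have := hX (.of R L) i h0
    infer_instance
  | succ i ih => exact finite_hom_succ hS (fun L _ _ _ => ih (by lia) L) (h _ hi) L hL

include hS in
theorem finite_hom_of_finite_hom_self (hX : IsCoconnective S X) {j : ℤ}
    (h : ∀ i ≤ j, Module.Finite R (S.obj (ModuleCat.of R R) ⟶ X⟦i⟧)) {i : ℤ} (hi : i ≤ j)
    (L : Type u) [AddCommGroup L] [Module R L] [Module.Finite R L] :
    Module.Finite R (S.obj (ModuleCat.of R L) ⟶ X⟦i⟧) := by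
  refine finite_hom_of_finite_hom_quotient (𝔞 := ⊥) hS hX (fun i hi => ?_) hi L bot_le
  have := h i hi
  let e : S.obj (ModuleCat.of R (R ⧸ (⊥ : Ideal R))) ≅ S.obj (ModuleCat.of R R) :=
    S.mapIso (Submodule.quotEquivOfEqBot (⊥ : Ideal R) rfl).toModuleIso
  exact .of_surjective (Linear.leftComp R (X⟦i⟧) e.hom) fun z => ⟨e.inv ≫ z, by simp⟩

variable [S.Linear R]

include hS in
theorem finite_range_leftComp_subtype {i : ℤ} {I : Ideal R}
    (hfin : ∀ (L : Type u) [AddCommGroup L] [Module R L] [Module.Finite R L],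
      Module.Finite R (S.obj (ModuleCat.of R L) ⟶ X⟦i⟧))
    (hI : ∀ r ∈ I, ∀ z : S.obj (ModuleCat.of R R) ⟶ X⟦i + 1⟧, r • z = 0) :
    Module.Finite R (LinearMap.range
      (Linear.leftComp R (X⟦i + 1⟧) (S.map (ModuleCat.ofHom I.subtype)))) := by
  obtain ⟨n, π, hπ⟩ := Module.Finite.exists_fin' R I
  obtain ⟨δ, hδ, -⟩ := hS.exists_exact (R := R) (shortExact_moduleCat π.exact_subtype_ker_map
    (Submodule.subtype_injective _) hπ) X i
  have := hfin (LinearMap.ker π)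
  refine Module.Finite.iff_fg.2 (Submodule.FG.of_le (T := LinearMap.range δ)
    (Module.Finite.iff_fg.1 inferInstance) ?_)
  rintro _ ⟨z, rfl⟩
  refine (hδ _).1 (eq_zero_of_forall_map_comp_eq_zero _ fun g => ?_)
  have e : ModuleCat.ofHom g ≫ ModuleCat.ofHom π ≫ ModuleCat.ofHom I.subtype =
      ((π (g 1) : I) : R) • 𝟙 (ModuleCat.of R R) := by
    refine ModuleCat.hom_ext (LinearMap.ext_ring ?_)
    simp
  simp only [Linear.leftComp_apply]
  rw [← S.map_comp_assoc, ← S.map_comp_assoc, Category.assoc, e, S.map_smul, S.map_id,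
    Linear.smul_comp, Category.id_comp]
  exact hI _ (π (g 1)).2 z

include hS in
theorem finite_hom_self_succ {i : ℤ} {I : Ideal R}
    (hfin : ∀ (L : Type u) [AddCommGroup L] [Module R L] [Module.Finite R L],
      Module.Finite R (S.obj (ModuleCat.of R L) ⟶ X⟦i⟧))
    (hI : ∀ r ∈ I, ∀ z : S.obj (ModuleCat.of R R) ⟶ X⟦i + 1⟧, r • z = 0)
    (h : Module.Finite R (S.obj (ModuleCat.of R (R ⧸ I)) ⟶ X⟦i + 1⟧)) :
    Module.Finite R (S.obj (ModuleCat.of R R) ⟶ X⟦i + 1⟧) := by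
  obtain ⟨_, -, hex⟩ := hS.exists_exact (R := R)
    (shortExact_moduleCat (LinearMap.exact_subtype_mkQ I) (Submodule.subtype_injective _)
      (Submodule.mkQ_surjective _)) X i
  have := finite_range_leftComp_subtype hS hfin hI
  exact finite_of_exact (g := (Linear.leftComp R (X⟦i + 1⟧)
    (S.map (ModuleCat.ofHom I.subtype))).rangeRestrict) fun z => Subtype.ext_iff.trans (hex z)

include hS in
theorem finite_hom_self_of_le_radical (hX : IsCoconnective S X) {j : ℤ}
    (h : ∀ i ≤ j, Module.Finite R (S.obj (ModuleCat.of R (R ⧸ 𝔞)) ⟶ X⟦i⟧))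
    (ha : 𝔞 ≤ (cohomologyAnnihilator S X).radical) {i : ℤ} (hi : i ≤ j) :
    Module.Finite R (S.obj (ModuleCat.of R R) ⟶ X⟦i⟧) := by
  obtain ⟨k, hk⟩ := Ideal.exists_pow_le_of_le_radical_of_fg ha (IsNoetherian.noetherian 𝔞)
  induction i using Int.strongRec (m := 0) with
  | lt i h0 =>
    have := hX (.of R R) i h0
    infer_instance
  | ge i h0 ih =>
    obtain ⟨i, rfl⟩ : ∃ l, i = l + 1 := ⟨i - 1, by ring⟩
    refine finite_hom_self_succ hS (fun L _ _ _ => finite_hom_of_finite_hom_self hS hX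
        (fun l hl => ih l (by lia) (by lia)) le_rfl L)
      (fun r hr => mem_cohomologyAnnihilator.1 (hk hr) _)
      (finite_hom_of_finite_hom_quotient hS hX h hi _ ?_)
    rw [Ideal.annihilator_quotient]
    exact fun a ha => ⟨k, Ideal.pow_mem_pow ha k⟩

include hS in
theorem finite_hom_quotient_of_le_radical_sup_span (d : ℕ) (l : List R)
    (hl : ∀ x ∈ l, x ∈ 𝔞.radical) (hX : IsCoconnective S X)
    (ha : 𝔞 ≤ (cohomologyAnnihilator S X ⊔ Ideal.span {x | x ∈ l}).radical)
    (h : ∀ i ≤ (d : ℤ), Module.Finite R (S.obj (ModuleCat.of R (R ⧸ 𝔞)) ⟶ X⟦i⟧))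
    (hfin : ∀ i : ℤ, d < i + l.length → Module.Finite R (S.obj (ModuleCat.of R R) ⟶ X⟦i⟧))
    (i : ℤ) : Module.Finite R (S.obj (ModuleCat.of R (R ⧸ 𝔞)) ⟶ X⟦i⟧) := by
  induction l generalizing X i with
  | nil =>
    refine finite_hom_of_finite_hom_self hS hX (fun i _ => ?_) (le_refl i) _
    rcases le_or_gt i d with hi | hi
    · exact finite_hom_self_of_le_radical hS hX h (by simpa using ha) hi
    · exact hfin i (by simpa using hi)
  | cons x l ih =>
    obtain ⟨K, hK⟩ := exists_isFiberSMul x X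
    obtain ⟨k, hk⟩ := hl x (by simp)
    have hkill (z : S.obj (ModuleCat.of R (R ⧸ 𝔞)) ⟶ X⟦i⟧) : x ^ k • z = 0 :=
      smul_hom_eq_zero (by rwa [Ideal.annihilator_quotient]) z
    suffices ∀ i, Module.Finite R (S.obj (ModuleCat.of R (R ⧸ 𝔞)) ⟶ K⟦i⟧) from
      have := this i
      hK.finite_hom_of_pow_smul_eq_zero _ i hkill
    refine ih (fun y hy => hl y (by simp [hy])) (hK.isCoconnective hX) ?_ (fun i hi => ?_)
      fun i hi => ?_
    · refine ha.trans (Ideal.radical_le_radical_iff.2 (sup_le ?_ (Ideal.span_le.2 ?_)))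
      · exact (Ideal.le_radical.trans hK.radical_le).trans (Ideal.radical_mono le_sup_left)
      · intro y hy
        rcases List.mem_cons.1 hy with rfl | hy
        · exact Ideal.radical_mono le_sup_left hK.mem_radical
        · exact Ideal.le_radical (Ideal.mem_sup_right (Ideal.subset_span hy))
    · have := h i hi
      have := h (i - 1) (by lia)
      exact hK.finite_hom _ i
    · have := hfin i (by simp; lia)
      have := hfin (i - 1) (by simp; lia)
      exact hK.finite_hom _ i

end FiniteHom

section PrimesDimLT

variable {R : Type*} [CommRing R]

variable (R) in
/-- The primes `𝔭` with `dim R/𝔭 < n`. -/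
def primesDimLT (n : ℕ) : Set (PrimeSpectrum R) :=
  {p | Order.coheight p < n}

theorem primesDimLT_zero : primesDimLT R 0 = ∅ := by
  simp [primesDimLT]

theorem mem_primesDimLT_succ {n : ℕ} {p : PrimeSpectrum R} :
    p ∈ primesDimLT R (n + 1) ↔ Order.coheight p ≤ n := by
  simpa [primesDimLT] using ENat.lt_natCast_add_one_iff

theorem Ioi_subset_primesDimLT {n : ℕ} {q : PrimeSpectrum R} (hq : q ∈ primesDimLT R (n + 1)) :
    Set.Ioi q ⊆ primesDimLT R n :=
  Order.coheight_le_coe_iff.1 (mem_primesDimLT_succ.1 hq)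

theorem zeroLocus_subset_primesDimLT {𝔞 : Ideal R} {n : ℕ} (h : ringKrullDim (R ⧸ 𝔞) ≤ n) :
    PrimeSpectrum.zeroLocus (𝔞 : Set R) ⊆ primesDimLT R (n + 1) := by
  intro p hp
  have hle : Set.Ici p ⊆ PrimeSpectrum.zeroLocus (𝔞 : Set R) := fun q hq =>
    (show 𝔞 ≤ p.asIdeal from hp).trans hq
  have : (Order.coheight p : WithBot ℕ∞) ≤ n := by
    rw [ringKrullDim_quotient] at h
    rw [Order.coheight_eq_krullDim_Ici]
    exact (Order.krullDim_le_of_strictMono (Set.inclusion hle) fun _ _ => id).trans h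
  exact mem_primesDimLT_succ.2 (by exact_mod_cast this)

theorem mem_primesDimLT_of_lt {p q : PrimeSpectrum R} (hqp : q < p) {n : ℕ}
    (h : ringKrullDim R ≤ n) : p ∈ primesDimLT R n := by
  have : (Order.coheight q : WithBot ℕ∞) ≤ n := (Order.coheight_le_krullDim q).trans h
  exact Order.coheight_le_coe_iff.1 (by exact_mod_cast this) p hqp

end PrimesDimLT

section TorsionFinite

variable {R : Type u} [CommRing R] {𝒟 : Type*} [Category 𝒟] [Preadditive 𝒟] [HasShift 𝒟 ℤ]
  [Linear R 𝒟]

/-- For an object `X` of the derived category and `S` the inclusion of the modules: the cohomology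
`Hom(R, X[i])` of `X` is `𝔞`-power torsion and, for `i ≤ j`, it is finitely generated outside the
primes `𝔭` with `dim R/𝔭 ≤ d - i`, and `Hom(R ⧸ 𝔞, X[i])` is finitely generated. Each fiber of the
multiplication by a generic element of `𝔞` inherits these properties. -/
structure IsTorsionFinite (S : ModuleCat.{u} R ⥤ 𝒟) (𝔞 : Ideal R) (d : ℕ) (j : ℤ) (X : 𝒟) :
    Prop where
  coconnective : IsCoconnective S X
  torsion : ∀ i : ℤ, IsPowerTorsion 𝔞 (S.obj (ModuleCat.of R R) ⟶ X⟦i⟧)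
  finiteOutside : ∀ i ≤ j,
    FiniteOutside (primesDimLT R (d + 1 - i).toNat) (S.obj (ModuleCat.of R R) ⟶ X⟦i⟧)
  finite : ∀ i ≤ j, Module.Finite R (S.obj (ModuleCat.of R (R ⧸ 𝔞)) ⟶ X⟦i⟧)

variable {S : ModuleCat.{u} R ⥤ 𝒟} {𝔞 : Ideal R} {d : ℕ} {j : ℤ} {X K : 𝒟} {x : R}

theorem IsTorsionFinite.mono (h : IsTorsionFinite S 𝔞 d j X) {j' : ℤ} (hj : j' ≤ j) :
    IsTorsionFinite S 𝔞 d j' X where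
  coconnective := h.coconnective
  torsion := h.torsion
  finiteOutside i hi := h.finiteOutside i (hi.trans hj)
  finite i hi := h.finite i (hi.trans hj)

variable [Limits.HasZeroObject 𝒟] [∀ n : ℤ, (shiftFunctor 𝒟 n).Additive] [Pretriangulated 𝒟]
  [∀ n : ℤ, (shiftFunctor 𝒟 n).Linear R]

theorem IsFiberSMul.exists_exact_quotient (hK : IsFiberSMul x X K) (A : 𝒟) (i : ℤ) :
    ∃ (f : ((A ⟶ X⟦i - 1⟧) ⧸ LinearMap.range (LinearMap.lsmul R (A ⟶ X⟦i - 1⟧) x)) →ₗ[R]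
      (A ⟶ K⟦i⟧)) (g : (A ⟶ K⟦i⟧) →ₗ[R] Submodule.torsionBy R (A ⟶ X⟦i⟧) x),
        Function.Exact f g ∧ Function.Surjective g := by
  obtain ⟨δ, φ, h₁, h₂, h₃⟩ := hK.exists_exact A i
  have hφ (z) : φ z ∈ Submodule.torsionBy R (A ⟶ X⟦i⟧) x := h₃.apply_apply_eq_zero z
  refine ⟨Submodule.liftQ _ δ (LinearMap.exact_iff.1 h₁).ge, φ.codRestrict _ hφ, ?_, fun z => ?_⟩
  · rw [LinearMap.exact_iff, Submodule.range_liftQ, LinearMap.ker_codRestrict]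
    exact LinearMap.exact_iff.1 h₂
  · obtain ⟨w, hw⟩ := (h₃ z).1 z.2
    exact ⟨w, Subtype.ext hw⟩

variable [IsNoetherianRing R]

theorem IsTorsionFinite.of_isFiberSMul (h : IsTorsionFinite S 𝔞 d j X) (hK : IsFiberSMul x X K)
    (hx : ∀ i < j, FiniteOutside (primesDimLT R (d - i).toNat)
      ((S.obj (ModuleCat.of R R) ⟶ X⟦i⟧) ⧸
        LinearMap.range (LinearMap.lsmul R (S.obj (ModuleCat.of R R) ⟶ X⟦i⟧) x))) :
    IsTorsionFinite S 𝔞 d j K where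
  coconnective := hK.isCoconnective h.coconnective
  torsion i := by
    obtain ⟨δ, φ, -, hδφ, -⟩ := hK.exists_exact (S.obj (ModuleCat.of R R)) i
    exact .of_exact hδφ (h.torsion _) (h.torsion _)
  finiteOutside i hi := by
    obtain ⟨f, g, hfg, -⟩ := hK.exists_exact_quotient (S.obj (ModuleCat.of R R)) i
    have := hx (i - 1) (by lia)
    rw [show (d - (i - 1) : ℤ) = d + 1 - i by ring] at this
    exact .of_exact f g hfg this
      ((h.finiteOutside i hi).of_injective _ (Submodule.subtype_injective _))
  finite i hi := by
    have := h.finite i hi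
    have := h.finite (i - 1) (by lia)
    exact hK.finite_hom _ i

theorem IsTorsionFinite.exists_fiber (h : IsTorsionFinite S 𝔞 d j X) (hj : j ≤ d)
    (hsoc : ∀ i ≤ j, SoclesFiniteOutside (primesDimLT R (d - i).toNat) 𝔞
      (S.obj (ModuleCat.of R R) ⟶ X⟦i⟧))
    (ha : ¬ 𝔞 ≤ (cohomologyAnnihilator S X).radical) :
    ∃ x ∈ 𝔞, (∀ i ≤ j, FiniteOutside (primesDimLT R (d - i).toNat)
      ((S.obj (ModuleCat.of R R) ⟶ X⟦i⟧) ⧸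
        LinearMap.range (LinearMap.lsmul R (S.obj (ModuleCat.of R R) ⟶ X⟦i⟧) x))) ∧
      ∃ K : 𝒟, IsFiberSMul x X K ∧
        (cohomologyAnnihilator S X).radical < (cohomologyAnnihilator S K).radical := by
  obtain ⟨q, hq, hqp, haq⟩ : ∃ q, cohomologyAnnihilator S X ≤ q ∧ q.IsPrime ∧ ¬ 𝔞 ≤ q := by
    rw [Ideal.radical_eq_sInf, le_sInf_iff] at ha
    push Not at ha
    obtain ⟨q, ⟨hq, hqp⟩, haq⟩ := ha
    exact ⟨q, hq, hqp, haq⟩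
  have hgen : ∀ i ∈ Set.Icc 0 j, HoldsGenerically 𝔞 fun x =>
      FiniteOutside (primesDimLT R (d - i).toNat) ((S.obj (ModuleCat.of R R) ⟶ X⟦i⟧) ⧸
        LinearMap.range (LinearMap.lsmul R (S.obj (ModuleCat.of R R) ⟶ X⟦i⟧) x)) := fun i hi =>
    (hsoc i hi.2).holdsGenerically (W' := primesDimLT R ((d - i).toNat + 1)) (h.torsion i)
      (fun q => Ioi_subset_primesDimLT) (by
        have := h.finiteOutside i hi.2
        rwa [show (d + 1 - i : ℤ).toNat = (d - i : ℤ).toNat + 1 by grind] at this)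
  obtain ⟨x, hx, hxq, hxf⟩ := ((holdsGenerically_notMem hqp haq).and
    (HoldsGenerically.forall_mem (Set.finite_Icc 0 j) hgen)).exists
  obtain ⟨K, hK⟩ := exists_isFiberSMul x X
  refine ⟨x, hx, fun i hi => ?_, K, hK, hK.radical_lt fun h => hxq (hqp.radical_le_iff.2 hq h)⟩
  rcases lt_or_ge i 0 with h0 | h0
  · have := h.coconnective (.of R R) i h0
    exact .of_finite
  · exact hxf i ⟨h0, hi⟩

variable (hS : IsTriangleValued 𝒟 S) [S.Additive] [S.Linear R]

include hS in
theorem IsTorsionFinite.soclesFiniteOutside (h : IsTorsionFinite S 𝔞 d j X) (hj : j ≤ d) :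
    SoclesFiniteOutside (primesDimLT R (d - j).toNat) 𝔞 (S.obj (ModuleCat.of R R) ⟶ X⟦j⟧) := by
  induction j using Int.strongRec (m := 0) generalizing X with
  | lt j h0 =>
    have := h.coconnective (.of R R) j h0
    exact .of_finite
  | ge j _ ihj =>
    induction hJ : (cohomologyAnnihilator S X).radical
      using WellFoundedGT.induction generalizing X with
    | _ J ihJ =>
    by_cases ha : 𝔞 ≤ (cohomologyAnnihilator S X).radical
    · have := finite_hom_self_of_le_radical hS h.coconnective h.finite ha le_rfl
      exact .of_finite
    obtain ⟨x, hx, hxf, K, hK, hlt⟩ := (h.mono (show j - 1 ≤ j by lia)).exists_fiber (by lia)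
      (fun i hi => ihj i (by lia) (h.mono (by lia)) (by lia)) ha
    have hKsoc := ihJ _ (hJ ▸ hlt) (h.of_isFiberSMul hK fun i hi => hxf i (by lia)) rfl
    obtain ⟨f, g, -, hg⟩ := hK.exists_exact_quotient (S.obj (ModuleCat.of R R)) j
    have hF := h.finiteOutside j le_rfl
    rw [show (d + 1 - j : ℤ).toNat = (d - j : ℤ).toNat + 1 by lia] at hF
    exact .of_torsionBy hx (h.torsion j) (fun q => Ioi_subset_primesDimLT) hF
      (.of_surjective g hg hKsoc)

include hS in
theorem IsTorsionFinite.finite_hom (h : IsTorsionFinite S 𝔞 d d X)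
    (hfin : ∀ i > (d : ℤ), Module.Finite R (S.obj (ModuleCat.of R R) ⟶ X⟦i⟧)) (i : ℤ) :
    Module.Finite R (S.obj (ModuleCat.of R (R ⧸ 𝔞)) ⟶ X⟦i⟧) := by
  induction hJ : (cohomologyAnnihilator S X).radical
      using WellFoundedGT.induction generalizing X with
  | _ J ihJ =>
  by_cases ha : 𝔞 ≤ (cohomologyAnnihilator S X).radical
  · refine finite_hom_of_finite_hom_self hS h.coconnective (fun i _ => ?_) le_rfl _
    rcases le_or_gt i d with hi | hi
    · exact finite_hom_self_of_le_radical hS h.coconnective h.finite ha hi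
    · exact hfin i hi
  obtain ⟨x, hx, hxf, K, hK, hlt⟩ := h.exists_fiber le_rfl
    (fun i hi => (h.mono hi).soclesFiniteOutside hS hi) ha
  have hKfin : ∀ i > (d : ℤ), Module.Finite R (S.obj (ModuleCat.of R R) ⟶ K⟦i⟧) := by
    intro i hi
    have := hfin i hi
    rcases eq_or_lt_of_le (show (d : ℤ) ≤ i - 1 by lia) with h | h
    · obtain ⟨f, g, hfg, -⟩ := hK.exists_exact_quotient (S.obj (ModuleCat.of R R)) i
      have hF := hxf (i - 1) h.ge
      rw [show (d - (i - 1) : ℤ).toNat = 0 by lia, primesDimLT_zero] at hF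
      have := hF.finite
      exact finite_of_exact hfg
    · have := hfin (i - 1) h
      exact hK.finite_hom _ i
  have := ihJ _ (hJ ▸ hlt) (h.of_isFiberSMul hK fun i hi => hxf i hi.le) hKfin rfl
  refine hK.finite_hom_of_pow_smul_eq_zero _ i (k := 1) fun z => ?_
  exact smul_hom_eq_zero (by rwa [pow_one, Ideal.annihilator_quotient]) z

end TorsionFinite

section FiniteTorsion

variable {R : Type*} [CommRing R] {N : Type*} [AddCommGroup N] [Module R N] {𝔞 : Ideal R}

theorem finite_torsionBySet_of_finite_hom [Module.Finite R (R ⧸ 𝔞 →ₗ[R] N)] :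
    Module.Finite R (Submodule.torsionBySet R N (𝔞 : Set R)) := by
  have hmem (f : R ⧸ 𝔞 →ₗ[R] N) : f 1 ∈ Submodule.torsionBySet R N (𝔞 : Set R) :=
    mem_torsionBySet_ideal.2 fun r hr => by
      rw [← map_smul, Algebra.smul_def, mul_one, Ideal.Quotient.algebraMap_eq,
        Ideal.Quotient.eq_zero_iff_mem.2 hr, map_zero]
  refine .of_surjective ((LinearMap.applyₗ (1 : R ⧸ 𝔞)).codRestrict _ hmem) fun z => ?_
  refine ⟨𝔞.liftQ (LinearMap.toSpanSingleton R N z) fun r hr => ?_, Subtype.ext ?_⟩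
  · exact mem_torsionBySet_ideal.1 z.2 r hr
  · exact one_smul R z.1

variable [IsNoetherianRing R]

variable (𝔞) in
theorem exists_pow_mul_eq_zero_of_mem_idealTorsion :
    ∃ k : ℕ, ∀ a ∈ 𝔞 ^ k, ∀ r ∈ idealTorsion 𝔞 R, a * r = 0 :=
  exists_pow_smul_eq_zero_of_fg (IsNoetherian.noetherian (idealTorsion 𝔞 R)) le_rfl

-- If `p` is minimal, then `𝔞` is nilpotent in `R_p`, so some `s ∉ p` kills a power of `𝔞`.
theorem exists_lt_of_idealTorsion_le {p : PrimeSpectrum R} (hap : 𝔞 ≤ p.asIdeal)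
    (h : idealTorsion 𝔞 R ≤ p.asIdeal) : ∃ q, q < p := by
  by_contra! hp
  have hmin : Minimal (· ∈ Module.support R R) p :=
    ⟨by simp [Module.mem_support_iff_of_finite, Module.annihilator_eq_bot.2 inferInstance],
      fun q _ => not_lt_iff_le_imp_ge.1 (hp q)⟩
  let Q : Ideal R := RingHom.ker (algebraMap R (Localization.AtPrime p.asIdeal))
  have hQ : 𝔞 ≤ Q.radical := fun r hr => by
    obtain ⟨k, s, hs, hk⟩ := exists_mul_pow_smul_eq_zero_of_minimal_support hmin (hap hr) (1 : R)
    refine ⟨k, (IsLocalization.map_eq_zero_iff p.asIdeal.primeCompl _ _).2 ⟨⟨s, hs⟩, ?_⟩⟩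
    simpa using hk
  obtain ⟨k, hk⟩ := Ideal.exists_pow_le_of_le_radical_of_fg hQ (IsNoetherian.noetherian 𝔞)
  have hpk : p ∉ Module.support R (𝔞 ^ k : Ideal R) := by
    refine Module.notMem_support_iff'.2 fun z => ?_
    obtain ⟨s, hs⟩ := (IsLocalization.map_eq_zero_iff p.asIdeal.primeCompl _ _).1 (hk z.2)
    exact ⟨s, s.2, Subtype.ext hs⟩
  rw [Module.mem_support_iff_of_finite] at hpk
  obtain ⟨s, hs, hsp⟩ := SetLike.not_le_iff_exists.1 hpk
  refine hsp (h ⟨k, fun a ha => ?_⟩)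
  rw [smul_eq_mul, mul_comm]
  exact congrArg Subtype.val (Module.mem_annihilator.1 hs ⟨a, ha⟩)

-- `N` is an extension of a submodule of a power of `(0 :_N 𝔞 ^ k)` by a module over
-- `R ⧸ idealTorsion 𝔞 R`, and no minimal prime of `R` contains both `𝔞` and `idealTorsion 𝔞 R`.
theorem IsPowerTorsion.finiteOutside_of_ringKrullDim_le {n : ℕ} (hR : ringKrullDim R ≤ n)
    (hN : IsPowerTorsion 𝔞 N) [Module.Finite R (Submodule.torsionBySet R N (𝔞 : Set R))] :
    FiniteOutside (primesDimLT R n) N := by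
  obtain ⟨k, hk⟩ := exists_pow_mul_eq_zero_of_mem_idealTorsion 𝔞
  have hsmul : ∀ r ∈ idealTorsion 𝔞 R, ∀ z : N,
      r • z ∈ Submodule.torsionBySet R N ((𝔞 ^ k : Ideal R) : Set R) := fun r hr z =>
    mem_torsionBySet_ideal.2 fun a ha => by rw [← mul_smul, hk a ha r hr, zero_smul]
  refine .of_torsionBySet (idealTorsion 𝔞 R) hsmul (.of_support_subset fun p hp => ?_)
    (FiniteOutside.of_finite.torsionBySet_pow k)
  obtain ⟨z, hz⟩ := Module.mem_support_iff_exists_annihilator.1 hp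
  have hap : 𝔞 ≤ p.asIdeal :=
    hN.le_of_mem_support (Module.support_subset_of_injective _ (Submodule.subtype_injective _) hp)
  obtain ⟨q, hq⟩ := exists_lt_of_idealTorsion_le hap fun r hr =>
    hz ((Submodule.mem_annihilator_span_singleton _ _).2
      (Subtype.ext (mem_torsionBySet_ideal.1 z.2 r hr)))
  exact mem_primesDimLT_of_lt hq hR

end FiniteTorsion

section DerivedCategory

variable {R : Type u} [CommRing R] [HasDerivedCategory (ModuleCat.{u} R)]

open DerivedCategory

theorem isTriangleValued_singleFunctor :
    IsTriangleValued (DerivedCategory (ModuleCat.{u} R)) (singleFunctor (ModuleCat.{u} R) 0) :=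
  fun _ hT => ⟨_, hT.singleTriangle_distinguished⟩

theorem isCoconnective_singleFunctor (N : ModuleCat.{u} R) :
    IsCoconnective (singleFunctor (ModuleCat.{u} R) 0)
      ((singleFunctor (ModuleCat.{u} R) 0).obj N) := fun L i hi => by
  have := TStructure.t.isGE_shift ((singleFunctor (ModuleCat.{u} R) 0).obj N) 0 i (-i)
  exact subsingleton_of_forall_eq 0 fun f => TStructure.t.zero f 0 (-i)

/-- The canonical isomorphism `N ≃ Hom(R, N)` with the morphisms in the derived category. -/
noncomputable def derivedHomSelfEquiv (N : ModuleCat.{u} R) :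
    N ≃ₗ[R] ((singleFunctor (ModuleCat.{u} R) 0).obj (.of R R) ⟶
      ((singleFunctor (ModuleCat.{u} R) 0).obj N)⟦(0 : ℤ)⟧) :=
  (Abelian.Ext.linearEquiv₀ ≪≫ₗ ModuleCat.homLinearEquiv ≪≫ₗ
    LinearMap.ringLmapEquivSelf R R N).symm ≪≫ₗ Abelian.Ext.homLinearEquiv (n := 0)

theorem subsingleton_derivedHom_self (N : ModuleCat.{u} R) {i : ℤ} (hi : i ≠ 0) :
    Subsingleton ((singleFunctor (ModuleCat.{u} R) 0).obj (.of R R) ⟶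
      ((singleFunctor (ModuleCat.{u} R) 0).obj N)⟦i⟧) := by
  rcases lt_or_ge i 0 with h | h
  · exact isCoconnective_singleFunctor N _ i h
  · obtain ⟨n, rfl⟩ : ∃ n : ℕ, i = (n + 1 : ℕ) := ⟨(i - 1).toNat, by lia⟩
    have : Projective (ModuleCat.of R R) :=
      ModuleCat.projective_of_free (Module.Basis.singleton Unit R)
    have := Abelian.Ext.subsingleton_of_projective (ModuleCat.of R R) N n
    exact (Abelian.Ext.homLinearEquiv (R := R)).symm.injective.subsingleton

theorem finite_derivedHom_of_finite_ext {L N : ModuleCat.{u} R} {d : ℕ}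
    (h : ∀ i ≤ d, Module.Finite R (Abelian.Ext L N i)) (i : ℤ) (hi : i ≤ d) :
    Module.Finite R ((singleFunctor (ModuleCat.{u} R) 0).obj L ⟶
      ((singleFunctor (ModuleCat.{u} R) 0).obj N)⟦i⟧) := by
  rcases lt_or_ge i 0 with h0 | h0
  · have := isCoconnective_singleFunctor N L i h0
    infer_instance
  · lift i to ℕ using h0
    have := h i (by lia)
    exact .equiv Abelian.Ext.homLinearEquiv

theorem isTorsionFinite_singleFunctor {𝔞 : Ideal R} {N : ModuleCat.{u} R} {d : ℕ}
    (hN : IsPowerTorsion 𝔞 N) (hW : FiniteOutside (primesDimLT R (d + 1)) N)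
    (h : ∀ i ≤ d, Module.Finite R (Abelian.Ext (.of R (R ⧸ 𝔞)) N i)) :
    IsTorsionFinite (singleFunctor (ModuleCat.{u} R) 0) 𝔞 d d
      ((singleFunctor (ModuleCat.{u} R) 0).obj N) where
  coconnective := isCoconnective_singleFunctor N
  torsion i := by
    rcases eq_or_ne i 0 with rfl | hi
    · exact hN.of_surjective (f := (derivedHomSelfEquiv N).toLinearMap)
        (derivedHomSelfEquiv N).surjective
    · have := subsingleton_derivedHom_self N hi
      exact fun z => ⟨0, fun r _ => Subsingleton.elim _ _⟩
  finiteOutside i _ := by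
    rcases eq_or_ne i 0 with rfl | hi
    · exact .of_surjective (derivedHomSelfEquiv N).toLinearMap (derivedHomSelfEquiv N).surjective hW
    · have := subsingleton_derivedHom_self N hi
      exact .of_finite
  finite := finite_derivedHom_of_finite_ext h

end DerivedCategory

section CofinitenessCondition

variable {R : Type u} [CommRing R]

/-- All modules `Extⁱ(R ⧸ 𝔞, N)` are finitely generated: the half of `𝔞`-cofiniteness that does
not concern the support. -/
def ExtFinite (𝔞 : Ideal R) (N : ModuleCat.{u} R) : Prop :=
  ∀ i, Module.Finite R (Abelian.Ext (.of R (R ⧸ 𝔞)) N i)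

/-- The condition `P_d(𝔞)`: an `𝔞`-power torsion module `N` with `Extⁱ(R ⧸ 𝔞, N)` finitely
generated for all `i ≤ d` is `𝔞`-cofinite. -/
def CofinitenessCondition (𝔞 : Ideal R) (d : ℕ) : Prop :=
  ∀ N : ModuleCat.{u} R, IsPowerTorsion 𝔞 N →
    (∀ i ≤ d, Module.Finite R (Abelian.Ext (.of R (R ⧸ 𝔞)) N i)) → ExtFinite 𝔞 N

variable {𝔞 : Ideal R} {d : ℕ} [IsNoetherianRing R]

theorem extFinite_of_finiteOutside {N : ModuleCat.{u} R} (hN : IsPowerTorsion 𝔞 N)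
    (hW : FiniteOutside (primesDimLT R (d + 1)) N)
    (h : ∀ i ≤ d, Module.Finite R (Abelian.Ext (.of R (R ⧸ 𝔞)) N i)) :
    ExtFinite 𝔞 N := fun i => by
  let := HasDerivedCategory.standard (ModuleCat.{u} R)
  have := (isTorsionFinite_singleFunctor hN hW h).finite_hom isTriangleValued_singleFunctor
    (fun i hi => by
      have := subsingleton_derivedHom_self N (show i ≠ 0 by lia)
      infer_instance) i
  exact .equiv Abelian.Ext.homLinearEquiv.symm

theorem cofinitenessCondition_of_ringKrullDim_quotient_le (h𝔞 : ringKrullDim (R ⧸ 𝔞) ≤ d) :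
    CofinitenessCondition 𝔞 d := fun _ hN =>
  extFinite_of_finiteOutside hN <| .of_support_subset fun _ hp =>
    zeroLocus_subset_primesDimLT h𝔞 (hN.le_of_mem_support hp)

theorem cofinitenessCondition_of_ringKrullDim_le (hR : ringKrullDim R ≤ d + 1) :
    CofinitenessCondition 𝔞 d := fun N hN h => by
  have := h 0 (Nat.zero_le d)
  have : Module.Finite R (R ⧸ 𝔞 →ₗ[R] N) :=
    .equiv (Abelian.Ext.linearEquiv₀ (R := R) ≪≫ₗ
      ModuleCat.homLinearEquiv (M := .of R (R ⧸ 𝔞)) (N := N) (S := R))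
  have := finite_torsionBySet_of_finite_hom (N := N) (𝔞 := 𝔞)
  exact extFinite_of_finiteOutside hN
    (hN.finiteOutside_of_ringKrullDim_le (by exact_mod_cast hR)) h

theorem exists_radical_span_eq_of_arithRank (𝔞 : Ideal R) :
    ∃ l : List R, l.length = arithRank 𝔞 ∧ (Ideal.span {x | x ∈ l}).radical = 𝔞.radical := by
  have hne : {n : ℕ | ∃ f : Fin n → R,
      (Ideal.span (Set.range f)).radical = 𝔞.radical}.Nonempty := by
    obtain ⟨n, f, hf⟩ := Submodule.fg_iff_exists_fin_generating_family.1
      (IsNoetherian.noetherian 𝔞)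
    exact ⟨n, f, congrArg Ideal.radical hf⟩
  obtain ⟨f, hf⟩ := Nat.sInf_mem hne
  refine ⟨List.ofFn f, List.length_ofFn, ?_⟩
  simpa only [List.mem_ofFn', Set.ofPred_mem_eq] using hf

theorem cofinitenessCondition_of_arithRank_le (h𝔞 : arithRank 𝔞 ≤ d) :
    CofinitenessCondition 𝔞 d := fun N _ h i => by
  let := HasDerivedCategory.standard (ModuleCat.{u} R)
  obtain ⟨l, hl, hrad⟩ := exists_radical_span_eq_of_arithRank 𝔞
  have hmem : ∀ x ∈ l, x ∈ 𝔞.radical := fun x hx =>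
    hrad ▸ Ideal.le_radical (Ideal.subset_span hx)
  have := finite_hom_quotient_of_le_radical_sup_span isTriangleValued_singleFunctor d l hmem
    (isCoconnective_singleFunctor N)
    (Ideal.le_radical.trans (hrad.ge.trans (Ideal.radical_mono le_sup_right)))
    (finite_derivedHom_of_finite_ext h)
    (fun i hi => by
      have := subsingleton_derivedHom_self N (show i ≠ 0 by lia)
      infer_instance) i
  exact .equiv Abelian.Ext.homLinearEquiv.symm

end CofinitenessCondition

section ExtComparison

open Limits Opposite

section HomologyClass

variable {R : Type u} [Ring R] (S : ShortComplex (ModuleCat.{v} R))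

/-- The class in homology of a cycle in a complex of modules. -/
noncomputable def homologyClass : LinearMap.ker S.g.hom →ₗ[R] S.homology :=
  (S.moduleCatCyclesIso.inv ≫ S.homologyπ).hom

theorem homologyClass_surjective : Function.Surjective (homologyClass S) :=
  (ModuleCat.epi_iff_surjective (S.moduleCatCyclesIso.inv ≫ S.homologyπ)).1 inferInstance

theorem homologyClass_eq_zero_iff (x : LinearMap.ker S.g.hom) :
    homologyClass S x = 0 ↔ ∃ y, S.f y = x.1 := by
  have hinj : Function.Injective S.moduleCatHomologyIso.inv :=
    (ModuleCat.mono_iff_injective _).1 inferInstance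
  have hx : homologyClass S x = S.moduleCatHomologyIso.inv (S.moduleCatLeftHomologyData.π x) := by
    simp only [homologyClass, ShortComplex.moduleCatCyclesIso_inv_π]
    rfl
  rw [hx, map_eq_zero_iff _ hinj]
  exact (Submodule.Quotient.mk_eq_zero _).trans (exists_congr fun _ => Subtype.ext_iff)

theorem homologyMap_homologyClass {S S' : ShortComplex (ModuleCat.{v} R)} (φ : S ⟶ S')
    (x : LinearMap.ker S.g.hom) (hx : φ.τ₂ x.1 ∈ LinearMap.ker S'.g.hom) :
    ShortComplex.homologyMap φ (homologyClass S x) = homologyClass S' ⟨φ.τ₂ x.1, hx⟩ := by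
  have hinj : Function.Injective S'.iCycles := (ModuleCat.mono_iff_injective _).1 inferInstance
  have hi (T : ShortComplex (ModuleCat.{v} R)) (z : LinearMap.ker T.g.hom) :
      T.iCycles (T.moduleCatCyclesIso.inv z) = z.1 :=
    ConcreteCategory.congr_hom T.moduleCatCyclesIso_inv_iCycles z
  have hcycles : ShortComplex.cyclesMap φ (S.moduleCatCyclesIso.inv x) =
      S'.moduleCatCyclesIso.inv (⟨φ.τ₂ x.1, hx⟩ : LinearMap.ker S'.g.hom) := by
    apply hinj
    rw [hi]
    refine (ConcreteCategory.congr_hom (ShortComplex.cyclesMap_i φ) _).trans ?_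
    exact congrArg φ.τ₂ (hi S x)
  refine (ConcreteCategory.congr_hom (ShortComplex.homologyπ_naturality φ) _).trans ?_
  exact congrArg S'.homologyπ hcycles

end HomologyClass

variable {R : Type u} [CommRing R] {C : Type*} [Category.{v} C] [Abelian C] [Linear R C]

section

variable {X : C} (P : ProjectiveResolution X) (Y : C) (n : ℕ)

/-- The complex `Hom(P, Y)` around degree `n`, for a projective resolution `P`. -/
noncomputable abbrev homShortComplex : ShortComplex (ModuleCat.{v} R) :=
  ((((((linearYoneda R C).obj Y).rightOp.mapHomologicalComplex _).obj P.complex)).sc n).unop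

variable [EnoughProjectives C]

/-- `Ext` as the homology of `Hom(P, Y)`, for a projective resolution `P`. -/
noncomputable def homologyIsoExt :
    (homShortComplex (R := R) P Y n).homology ≅ ((Ext R C n).obj (op X)).obj Y :=
  (homShortComplex (R := R) P Y n).homologyOpIso.unop ≪≫
   (P.isoLeftDerivedObj ((linearYoneda R C).obj Y).rightOp n).unop

end

section Cocycle

variable {X : C} (P : ProjectiveResolution X) {Y : C} {n : ℕ}

theorem mem_ker_homShortComplex_g {z : P.complex.X n ⟶ Y} :
    z ∈ LinearMap.ker (homShortComplex (R := R) P Y n).g.hom ↔ P.complex.d (n + 1) n ≫ z = 0 := by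
  have h : P.complex.d ((ComplexShape.down ℕ).prev n) n ≫ z = 0 ↔
      P.complex.d (n + 1) n ≫ z = 0 := by
    rw [show (ComplexShape.down ℕ).prev n = n + 1 by simp]
  exact h

theorem extMk_degree_zero_eq_zero_iff [HasExt.{v} C] (z : P.complex.X 0 ⟶ Y)
    (hz : P.complex.d 1 0 ≫ z = 0) : P.extMk z 1 rfl hz = 0 ↔ z = 0 := by
  refine ⟨fun h => ?_, ?_⟩
  · rw [← P.extEquivCohomologyClass.apply_eq_iff_eq,
      ProjectiveResolution.extEquivCohomologyClass_extMk,
      ProjectiveResolution.extEquivCohomologyClass_zero,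
      CochainComplex.HomComplex.CohomologyClass.mk_eq_zero_iff,
      CochainComplex.HomComplex.Cocycle.toSingleMk_mem_coboundaries_iff _ _ _ _ _ 1 (by lia)] at h
    obtain ⟨g, hg⟩ := h
    have hd : P.cochainComplex.d (-(0 : ℕ)) 1 = 0 :=
      (P.cochainComplex.isZero_of_isStrictlyLE 0 1).eq_of_tgt _ _
    rw [hd, zero_comp] at hg
    rw [← cancel_epi (P.cochainComplexXIso (-(0 : ℕ)) 0 rfl).hom, comp_zero, ← hg]
  · rintro rfl
    simp

-- In degree zero, `next 0 = 0` and the differential `d 0 0` is zero.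
theorem extMk_eq_zero_iff_exists_d_next [HasExt.{v} C] (z : P.complex.X n ⟶ Y)
    (hz : P.complex.d (n + 1) n ≫ z = 0) :
    P.extMk z (n + 1) rfl hz = 0 ↔
      ∃ y : P.complex.X ((ComplexShape.down ℕ).next n) ⟶ Y,
        P.complex.d n ((ComplexShape.down ℕ).next n) ≫ y = z := by
  cases n with
  | zero =>
    have hd : P.complex.d 0 ((ComplexShape.down ℕ).next 0) = 0 := P.complex.shape _ _ (by simp)
    simp only [hd, zero_comp, exists_const]
    rw [extMk_degree_zero_eq_zero_iff P z hz, eq_comm]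
  | succ p =>
    rw [P.extMk_eq_zero_iff _ _ _ _ p rfl]
    have h : (ComplexShape.down ℕ).next (p + 1) = p := ChainComplex.next_nat_succ p
    rw [h]

section

variable [EnoughProjectives C]

variable (R Y n) in
/-- The class in `Ext` of a cocycle in `Hom(P, Y)`. -/
noncomputable def cocycleToExt :
    LinearMap.ker (homShortComplex (R := R) P Y n).g.hom →ₗ[R] ((Ext R C n).obj (op X)).obj Y :=
  (homologyIsoExt P Y n).hom.hom ∘ₗ homologyClass (homShortComplex (R := R) P Y n)

theorem cocycleToExt_surjective : Function.Surjective (cocycleToExt R P Y n) :=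
  ((ModuleCat.epi_iff_surjective (homologyIsoExt (R := R) P Y n).hom).1 inferInstance).comp
    (homologyClass_surjective (homShortComplex (R := R) P Y n))

theorem cocycleToExt_eq_zero_iff (z : LinearMap.ker (homShortComplex (R := R) P Y n).g.hom) :
    cocycleToExt R P Y n z = 0 ↔ ∃ y, (homShortComplex (R := R) P Y n).f y = z.1 := by
  have hinj : Function.Injective (homologyIsoExt (R := R) P Y n).hom :=
    (ModuleCat.mono_iff_injective _).1 inferInstance
  exact (map_eq_zero_iff _ hinj).trans (homologyClass_eq_zero_iff _ z)

end

variable [HasExt.{v} C]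

variable (R Y n) in
/-- The class in `Abelian.Ext` of a cocycle in `Hom(P, Y)`. -/
noncomputable def cocycleToAbelianExt :
    LinearMap.ker (homShortComplex (R := R) P Y n).g.hom →ₗ[R] Abelian.Ext X Y n where
  toFun z := P.extMk (z.1 : P.complex.X n ⟶ Y) (n + 1) rfl
    ((mem_ker_homShortComplex_g (R := R) P).1 z.2)
  map_add' z w := (P.add_extMk _ _ _ _ _ _).symm
  map_smul' r z := by
    rw [RingHom.id_apply, Abelian.Ext.smul_eq_comp_mk₀]
    refine Eq.trans ?_ (P.extMk_comp_mk₀ _ _ _ _ _).symm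
    congr 1
    exact ((Linear.comp_smul _ _ _ _ _ _).trans
      (congrArg (r • ·) (Category.comp_id (z.1 : P.complex.X n ⟶ Y)))).symm

theorem cocycleToAbelianExt_surjective :
    Function.Surjective (cocycleToAbelianExt R P Y n) := by
  intro x
  obtain ⟨z, hz, rfl⟩ := P.extMk_surjective x (n + 1) rfl
  exact ⟨⟨z, (mem_ker_homShortComplex_g (R := R) P).2 hz⟩, rfl⟩

variable [EnoughProjectives C]

theorem ker_cocycleToExt :
    LinearMap.ker (cocycleToExt R P Y n) = LinearMap.ker (cocycleToAbelianExt R P Y n) := by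
  ext z
  exact (cocycleToExt_eq_zero_iff P z).trans (extMk_eq_zero_iff_exists_d_next P _
    ((mem_ker_homShortComplex_g (R := R) P).1 z.2)).symm

variable (R) in
/-- The comparison between the two definitions of `Ext` in Mathlib: the derived functors of `Hom`
and the morphisms in the derived category. -/
noncomputable def extEquivAbelianExt (X Y : C) (n : ℕ) :
    ((Ext R C n).obj (op X)).obj Y ≃ₗ[R] Abelian.Ext X Y n :=
  ((cocycleToExt R (projectiveResolution X) Y n).quotKerEquivOfSurjective
      (cocycleToExt_surjective _)).symm ≪≫ₗ
    Submodule.quotEquivOfEq _ _ (ker_cocycleToExt _) ≪≫ₗ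
    (cocycleToAbelianExt R (projectiveResolution X) Y n).quotKerEquivOfSurjective
      (cocycleToAbelianExt_surjective _)

theorem extEquivAbelianExt_cocycleToExt
    (z : LinearMap.ker (homShortComplex (R := R) (projectiveResolution X) Y n).g.hom) :
    extEquivAbelianExt R X Y n (cocycleToExt R (projectiveResolution X) Y n z) =
      cocycleToAbelianExt R (projectiveResolution X) Y n z := by
  have h : ((cocycleToExt R (projectiveResolution X) Y n).quotKerEquivOfSurjective
      (cocycleToExt_surjective _)).symm (cocycleToExt R (projectiveResolution X) Y n z) =
        Submodule.Quotient.mk z := by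
    rw [LinearEquiv.symm_apply_eq]
    rfl
  exact congrArg (fun w =>
    (cocycleToAbelianExt R (projectiveResolution X) Y n).quotKerEquivOfSurjective
      (cocycleToAbelianExt_surjective _) (Submodule.quotEquivOfEq _ _ (ker_cocycleToExt _) w)) h

end Cocycle

section Naturality

variable {X X' : C} {f : X' ⟶ X} {P : ProjectiveResolution X} {P' : ProjectiveResolution X'}
  (Y : C) (n : ℕ)

variable (R) in
/-- The map `Hom(P, Y) → Hom(P', Y)` induced by a morphism of projective resolutions. -/
noncomputable abbrev homShortComplexMap (φ : ProjectiveResolution.Hom P' P f) :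
    homShortComplex (R := R) P Y n ⟶ homShortComplex P' Y n :=
  ShortComplex.unopMap ((HomologicalComplex.shortComplexFunctor _ _ n).map
    ((((linearYoneda R C).obj Y).rightOp.mapHomologicalComplex _).map φ.hom))

variable [EnoughProjectives C]

theorem homologyIsoExt_hom_naturality (φ : ProjectiveResolution.Hom P' P f) :
    (homologyIsoExt (R := R) P Y n).hom ≫ ((Ext R C n).map f.op).app Y =
      ShortComplex.homologyMap (homShortComplexMap R Y n φ) ≫ (homologyIsoExt P' Y n).hom := by
  have hderived := congrArg Quiver.Hom.unop (ProjectiveResolution.isoLeftDerivedObj_hom_naturality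
    f P' P φ.hom (by simpa using φ.hom_f_zero_comp_π_f_zero) ((linearYoneda R C).obj Y).rightOp n)
  have hop := congrArg Quiver.Hom.unop
    (ShortComplex.homologyOpIso_hom_naturality (homShortComplexMap R Y n φ))
  let a := (homShortComplex (R := R) P Y n).homologyOpIso.hom.unop
  let b := (P'.isoLeftDerivedObj ((linearYoneda R C).obj Y).rightOp n).hom.unop
  exact (Category.assoc _ _ _).trans ((congrArg (a ≫ ·) hderived).trans
    ((Category.assoc _ _ _).symm.trans ((congrArg (· ≫ b) hop).trans (Category.assoc _ _ _))))

theorem map_cocycleToExt (φ : ProjectiveResolution.Hom P' P f)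
    (z : LinearMap.ker (homShortComplex (R := R) P Y n).g.hom)
    (hz : φ.hom.f n ≫ (z.1 : P.complex.X n ⟶ Y) ∈
      LinearMap.ker (homShortComplex (R := R) P' Y n).g.hom) :
    ((Ext R C n).map f.op).app Y (cocycleToExt R P Y n z) =
      cocycleToExt R P' Y n ⟨φ.hom.f n ≫ (z.1 : P.complex.X n ⟶ Y), hz⟩ := by
  refine (ConcreteCategory.congr_hom (homologyIsoExt_hom_naturality (R := R) Y n φ) _).trans ?_
  exact congrArg (homologyIsoExt (R := R) P' Y n).hom
    (homologyMap_homologyClass (homShortComplexMap R Y n φ) z hz)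

variable [HasExt.{v} C]

theorem extEquivAbelianExt_naturality {Y : C} {n : ℕ} (f : X' ⟶ X)
    (x : ((Ext R C n).obj (op X)).obj Y) :
    extEquivAbelianExt R X' Y n (((Ext R C n).map f.op).app Y x) =
      (Abelian.Ext.mk₀ f).comp (extEquivAbelianExt R X Y n x) (zero_add n) := by
  let P := projectiveResolution X
  let P' := projectiveResolution X'
  obtain ⟨⟨z, hz⟩, rfl⟩ := cocycleToExt_surjective P x
  let φ : ProjectiveResolution.Hom P' P f := ⟨ProjectiveResolution.lift f _ _,
    (ProjectiveResolution.lift_commutes_zero f _ _).trans (by simp)⟩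
  have hd : P.complex.d (n + 1) n ≫ (z : _ ⟶ Y) = 0 := (mem_ker_homShortComplex_g (R := R) _).1 hz
  have hφ : φ.hom.f n ≫ (z : P.complex.X n ⟶ Y) ∈
      LinearMap.ker (homShortComplex (R := R) P' Y n).g.hom :=
    (mem_ker_homShortComplex_g _).2
      ((φ.hom.comm_assoc _ _ _).symm.trans ((congrArg _ hd).trans comp_zero))
  calc extEquivAbelianExt R X' Y n (((Ext R C n).map f.op).app Y (cocycleToExt R P Y n ⟨z, hz⟩))
      = extEquivAbelianExt R X' Y n (cocycleToExt R P' Y n ⟨_, hφ⟩) :=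
        congrArg _ (map_cocycleToExt Y n φ ⟨z, hz⟩ hφ)
    _ = cocycleToAbelianExt R P' Y n ⟨_, hφ⟩ := extEquivAbelianExt_cocycleToExt _
    _ = (Abelian.Ext.mk₀ f).comp (cocycleToAbelianExt R P Y n ⟨z, hz⟩) (zero_add n) :=
        (ProjectiveResolution.mk₀_comp_extMk z (n + 1) rfl hd φ).symm
    _ = (Abelian.Ext.mk₀ f).comp (extEquivAbelianExt R X Y n (cocycleToExt R P Y n ⟨z, hz⟩))
          (zero_add n) := by rw [extEquivAbelianExt_cocycleToExt]

end Naturality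

end ExtComparison

section ExtSequence

open Abelian

variable (R : Type*) [CommRing R] {C : Type*} [Category.{v} C] [Abelian C] [Linear R C]
  [HasExt.{w} C] (X : C) {S : ShortComplex C} (hS : S.ShortExact)

include hS

theorem exact_postcomp_extClass_postcomp_f {i j : ℕ} (h : i + 1 = j) :
    Function.Exact (hS.extClass.postcompOfLinear R X h)
      ((Ext.mk₀ S.f).postcompOfLinear R X (add_zero j)) := by
  refine fun x => ⟨fun hx => Ext.covariant_sequence_exact₁ _ hS x hx h, ?_⟩
  rintro ⟨y, rfl⟩
  exact (Ext.comp_assoc y hS.extClass (Ext.mk₀ S.f) h (add_zero 1) (by lia)).trans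
    (by rw [hS.extClass_comp, Ext.comp_zero])

theorem exact_postcomp_f_postcomp_g (i : ℕ) :
    Function.Exact ((Ext.mk₀ S.f).postcompOfLinear R X (add_zero i))
      ((Ext.mk₀ S.g).postcompOfLinear R X (add_zero i)) := by
  refine fun x => ⟨fun hx => Ext.covariant_sequence_exact₂ _ hS x hx, ?_⟩
  rintro ⟨y, rfl⟩
  exact (Ext.comp_assoc y (Ext.mk₀ S.f) (Ext.mk₀ S.g) (add_zero i) (add_zero 0) (by lia)).trans
    (by rw [Ext.mk₀_comp_mk₀, S.zero, Ext.mk₀_zero, Ext.comp_zero])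

theorem exact_postcomp_g_postcomp_extClass {i j : ℕ} (h : i + 1 = j) :
    Function.Exact ((Ext.mk₀ S.g).postcompOfLinear R X (add_zero i))
      (hS.extClass.postcompOfLinear R X h) := by
  refine fun x => ⟨fun hx => Ext.covariant_sequence_exact₃ _ hS x h hx, ?_⟩
  rintro ⟨y, rfl⟩
  exact (Ext.comp_assoc y (Ext.mk₀ S.g) hS.extClass (add_zero i) (zero_add 1) (by lia)).trans
    (by rw [hS.comp_extClass, Ext.comp_zero])

omit hS

/-- The connecting isomorphism `Extⁱ(X, S.X₃) ≃ Extⁱ⁺¹(X, S.X₁)` of a short exact sequence whose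
middle term has no `Ext` in degrees `i` and `i + 1`. -/
noncomputable def extConnectingEquiv (i : ℕ) [Subsingleton (Ext X S.X₂ i)]
    [Subsingleton (Ext X S.X₂ (i + 1))] : Ext X S.X₃ i ≃ₗ[R] Ext X S.X₁ (i + 1) :=
  .ofBijective (hS.extClass.postcompOfLinear R X rfl) <| by
    refine ⟨(injective_iff_map_eq_zero _).2 fun x hx => ?_, fun x => ?_⟩
    · obtain ⟨y, rfl⟩ := Ext.covariant_sequence_exact₃ _ hS x rfl hx
      rw [Subsingleton.elim y 0, Ext.zero_comp]
    · exact Ext.covariant_sequence_exact₁ _ hS x (Subsingleton.elim _ _) rfl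

end ExtSequence

section ExtQuotientPow

open Abelian

variable {R : Type u} [CommRing R] {𝔞 : Ideal R}

/-- The projection `R ⧸ I ⟶ R ⧸ J` for `I ≤ J`, in the form in which it enters the definition of
`localCohomology`. -/
noncomputable def quotientProj {I J : Ideal R} (h : I ≤ J) :
    ModuleCat.of R (R ⧸ I) ⟶ ModuleCat.of R (R ⧸ J) :=
  ModuleCat.ofHom (Submodule.mapQ I J LinearMap.id h)

theorem quotientProj_comp {I J K : Ideal R} (h : I ≤ J) (h' : J ≤ K) :
    quotientProj h ≫ quotientProj h' = quotientProj (h.trans h') := by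
  ext
  rfl

/-- The transition maps of the direct system `Extⁱ(R ⧸ 𝔞 ^ t, M)` defining local cohomology. -/
noncomputable def extPowMap (𝔞 : Ideal R) (M : ModuleCat.{u} R) (i : ℕ) {s t : ℕ} (h : s ≤ t) :
    Ext (.of R (R ⧸ 𝔞 ^ s)) M i →ₗ[R] Ext (.of R (R ⧸ 𝔞 ^ t)) M i :=
  (Ext.mk₀ (quotientProj (Ideal.pow_le_pow_right h))).precompOfLinear R M (zero_add i)

variable {M N : ModuleCat.{u} R} {i s t : ℕ}

theorem extPowMap_apply (h : s ≤ t) (x : Ext (.of R (R ⧸ 𝔞 ^ s)) M i) :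
    extPowMap 𝔞 M i h x =
      (Ext.mk₀ (quotientProj (Ideal.pow_le_pow_right h))).comp x (zero_add i) :=
  rfl

theorem extPowMap_refl (x : Ext (.of R (R ⧸ 𝔞 ^ s)) M i) : extPowMap 𝔞 M i le_rfl x = x := by
  have : quotientProj (le_refl (𝔞 ^ s)) = 𝟙 _ := by
    ext
    rfl
  rw [extPowMap_apply, this, Ext.mk₀_id_comp]

theorem extPowMap_extPowMap {r : ℕ} (h : s ≤ t) (h' : t ≤ r) (x : Ext (.of R (R ⧸ 𝔞 ^ s)) M i) :
    extPowMap 𝔞 M i h' (extPowMap 𝔞 M i h x) = extPowMap 𝔞 M i (h.trans h') x := by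
  simp only [extPowMap_apply, Ext.mk₀_comp_mk₀_assoc, quotientProj_comp]

theorem extPowMap_comp {j k : ℕ} (h : s ≤ t) (hk : i + j = k)
    (x : Ext (.of R (R ⧸ 𝔞 ^ s)) M i) (y : Ext M N j) :
    extPowMap 𝔞 N k h (x.comp y hk) = (extPowMap 𝔞 M i h x).comp y hk :=
  (Ext.comp_assoc _ _ _ (zero_add i) hk (by lia)).symm

/-- The embedding of `Ext⁰(R ⧸ I, N) = Hom(R ⧸ I, N)` into `N` by evaluation at `1`. -/
noncomputable def extZeroEval (I : Ideal R) (N : ModuleCat.{u} R) :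
    Ext (.of R (R ⧸ I)) N 0 →ₗ[R] N :=
  (LinearMap.applyₗ (Submodule.Quotient.mk (p := I) 1)) ∘ₗ
    (ModuleCat.homLinearEquiv (M := .of R (R ⧸ I)) (N := N) (S := R)).toLinearMap ∘ₗ
    (Ext.linearEquiv₀ (R := R)).toLinearMap

variable {I : Ideal R}

theorem extZeroEval_mk₀ (φ : .of R (R ⧸ I) ⟶ N) :
    extZeroEval I N (Ext.mk₀ φ) = φ.hom (Submodule.Quotient.mk 1) := by
  obtain ⟨x, rfl⟩ := (Ext.linearEquiv₀ (R := R)).surjective φ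
  rw [Ext.mk₀_linearEquiv₀_apply]
  rfl

theorem extZeroEval_injective (I : Ideal R) (N : ModuleCat.{u} R) :
    Function.Injective (extZeroEval I N) := by
  refine (injective_iff_map_eq_zero _).2 fun x hx => ?_
  obtain ⟨φ, rfl⟩ := (Ext.mk₀_bijective _ _).2 x
  rw [extZeroEval_mk₀] at hx
  have : φ = 0 := by
    refine ModuleCat.hom_ext (LinearMap.ext fun r => ?_)
    obtain ⟨r, rfl⟩ := Submodule.Quotient.mk_surjective _ r
    have := congr(r • $hx)
    rwa [← map_smul, ← Submodule.Quotient.mk_smul, smul_eq_mul, mul_one, smul_zero] at this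
  rw [this, Ext.mk₀_zero]

theorem smul_extZeroEval (x : Ext (.of R (R ⧸ I)) N 0) {a : R} (ha : a ∈ I) :
    a • extZeroEval I N x = 0 := by
  obtain ⟨φ, rfl⟩ := (Ext.mk₀_bijective _ _).2 x
  rw [extZeroEval_mk₀, ← map_smul, ← Submodule.Quotient.mk_smul, smul_eq_mul, mul_one,
    (Submodule.Quotient.mk_eq_zero _).mpr ha, map_zero]

theorem exists_extZeroEval_eq {z : N} (hz : ∀ a ∈ I, a • z = 0) : ∃ x, extZeroEval I N x = z := by
  refine ⟨Ext.mk₀ (ModuleCat.ofHom (Submodule.liftQ I (LinearMap.toSpanSingleton R N z)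
    fun a ha => hz a ha)), ?_⟩
  rw [extZeroEval_mk₀]
  exact one_smul R z

theorem extZeroEval_comp_mk₀ (x : Ext (.of R (R ⧸ I)) M 0) (f : M ⟶ N) :
    extZeroEval I N (x.comp (Ext.mk₀ f) (zero_add 0)) = f.hom (extZeroEval I M x) := by
  obtain ⟨φ, rfl⟩ := (Ext.mk₀_bijective _ _).2 x
  rw [Ext.mk₀_comp_mk₀, extZeroEval_mk₀, extZeroEval_mk₀]
  rfl

theorem extZeroEval_extPowMap (h : s ≤ t) (x : Ext (.of R (R ⧸ 𝔞 ^ s)) N 0) :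
    extZeroEval (𝔞 ^ t) N (extPowMap 𝔞 N 0 h x) = extZeroEval (𝔞 ^ s) N x := by
  obtain ⟨φ, rfl⟩ := (Ext.mk₀_bijective _ _).2 x
  rw [extPowMap_apply, Ext.mk₀_comp_mk₀, extZeroEval_mk₀, extZeroEval_mk₀]
  rfl

theorem subsingleton_ext_zero_of_idealTorsion_eq_bot (hN : idealTorsion 𝔞 N = ⊥)
    (hI : 𝔞 ^ t ≤ I) : Subsingleton (Ext (.of R (R ⧸ I)) N 0) := by
  refine subsingleton_of_forall_eq 0 fun x => extZeroEval_injective I N ?_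
  rw [map_zero, ← Submodule.mem_bot R, ← hN]
  exact ⟨t, fun a ha => smul_extZeroEval x (hI ha)⟩

end ExtQuotientPow

section ExtPowerTorsion

open Abelian

variable {R : Type u} [CommRing R] [IsNoetherianRing R] {𝔞 : Ideal R} {N : ModuleCat.{u} R}

theorem injective_of_idealTorsion (𝔞 : Ideal R) (J : ModuleCat.{u} R) [Injective J] :
    Injective (ModuleCat.of R (idealTorsion 𝔞 J)) := by
  have : Module.Injective R J := (Module.injective_iff_injective_object R J).mpr inferInstance
  exact (Module.injective_iff_injective_object R _).mp injective_idealTorsion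

theorem exists_shortExact_injective_isPowerTorsion (hN : IsPowerTorsion 𝔞 N) :
    ∃ (J Q : ModuleCat.{u} R) (f : N ⟶ J) (g : J ⟶ Q) (w : f ≫ g = 0),
      (ShortComplex.mk f g w).ShortExact ∧ Injective J ∧ IsPowerTorsion 𝔞 J ∧
        IsPowerTorsion 𝔞 Q := by
  obtain ⟨⟨J, _, ι, hιm⟩⟩ := EnoughInjectives.presentation N
  have hι : Function.Injective ι.hom := (ModuleCat.mono_iff_injective _).mp hιm
  let f : N →ₗ[R] idealTorsion 𝔞 J := ι.hom.codRestrict _ fun z =>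
    (hN z).imp fun n hn a ha => by rw [← map_smul, hn a ha, map_zero]
  have hf : Function.Injective f := fun x y hxy => hι congr(($hxy).1)
  exact ⟨_, _, _, _, _, shortExact_moduleCat (f := f) (g := f.range.mkQ)
    (LinearMap.exact_map_mkQ_range f) hf (Submodule.mkQ_surjective _),
    injective_of_idealTorsion 𝔞 J, isPowerTorsion_idealTorsion,
    isPowerTorsion_idealTorsion.quotient _⟩

-- A morphism `R ⧸ 𝔞 ^ t ⟶ Q` need not lift along `J ⟶ Q`, but its value at `1` has a preimage in
-- `J`, which is killed by some `𝔞 ^ s`; so it lifts after restriction to `R ⧸ 𝔞 ^ s`.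
theorem exists_extPowMap_one_eq_zero (hN : IsPowerTorsion 𝔞 N) {t : ℕ}
    (y : Ext (.of R (R ⧸ 𝔞 ^ t)) N 1) : ∃ s, ∃ h : t ≤ s, extPowMap 𝔞 N 1 h y = 0 := by
  obtain ⟨J, Q, f, g, w, hS, _, hJ, -⟩ := exists_shortExact_injective_isPowerTorsion hN
  have hsub := Ext.subsingleton_of_injective (.of R (R ⧸ 𝔞 ^ t)) J 0
  obtain ⟨x, rfl⟩ := Ext.covariant_sequence_exact₁ _ hS y (hsub.elim _ _) (zero_add 1)
  have hg : Function.Surjective g.hom := (ModuleCat.epi_iff_surjective g).mp hS.epi_g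
  obtain ⟨j, hj⟩ := hg (extZeroEval _ _ x)
  obtain ⟨n, hn⟩ := hJ j
  obtain ⟨v, hv⟩ := exists_extZeroEval_eq (I := 𝔞 ^ (max n t))
    fun a ha => hn a (Ideal.pow_le_pow_right (le_max_left _ _) ha)
  have hx : extPowMap 𝔞 _ 0 (le_max_right n t) x = v.comp (Ext.mk₀ g) (zero_add 0) := by
    apply extZeroEval_injective
    rw [extZeroEval_extPowMap, extZeroEval_comp_mk₀, hv, hj]
  refine ⟨max n t, le_max_right _ _, ?_⟩
  rw [extPowMap_comp _ (zero_add 1), hx, Ext.comp_assoc v _ _ (zero_add 0) (zero_add 1)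
    (by lia), hS.comp_extClass, Ext.comp_zero]

theorem exists_extPowMap_succ_eq_zero (i : ℕ) {N : ModuleCat.{u} R} (hN : IsPowerTorsion 𝔞 N)
    {t : ℕ} (y : Ext (.of R (R ⧸ 𝔞 ^ t)) N (i + 1)) :
    ∃ s, ∃ h : t ≤ s, extPowMap 𝔞 N (i + 1) h y = 0 := by
  induction i generalizing N t with
  | zero => exact exists_extPowMap_one_eq_zero hN y
  | succ i ih =>
    obtain ⟨J, Q, f, g, w, hS, _, -, hQ⟩ := exists_shortExact_injective_isPowerTorsion hN
    have hsub := Ext.subsingleton_of_injective (.of R (R ⧸ 𝔞 ^ t)) J (i + 1)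
    obtain ⟨x, rfl⟩ := Ext.covariant_sequence_exact₁ _ hS y (hsub.elim _ _) rfl
    obtain ⟨s, h, hs⟩ := ih hQ x
    exact ⟨s, h, by rw [extPowMap_comp, hs, Ext.zero_comp]⟩

end ExtPowerTorsion

section LocalCohomology

open Abelian

variable {R : Type u} [CommRing R] {𝔞 : Ideal R}

/-- A presentation of `H` as the direct limit of the modules `Extⁱ(R ⧸ 𝔞 ^ t, M)`, that is, as
`H^i_𝔞(M)`. -/
structure LocalCohomologyPresentation (𝔞 : Ideal R) (M : ModuleCat.{u} R) (i : ℕ) (H : Type u)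
    [AddCommGroup H] [Module R H] where
  /-- the maps to the limit -/
  ι (t : ℕ) : Ext (.of R (R ⧸ 𝔞 ^ t)) M i →ₗ[R] H
  ι_extPowMap {s t : ℕ} (h : s ≤ t) (x : Ext (.of R (R ⧸ 𝔞 ^ s)) M i) :
    ι t (extPowMap 𝔞 M i h x) = ι s x
  exists_ι_eq (z : H) : ∃ t x, ι t x = z
  exists_extPowMap_eq_zero {t : ℕ} {x : Ext (.of R (R ⧸ 𝔞 ^ t)) M i} (hx : ι t x = 0) :
    ∃ s, ∃ h : t ≤ s, extPowMap 𝔞 M i h x = 0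

namespace LocalCohomologyPresentation

variable {M : ModuleCat.{u} R} {i : ℕ} {H H' : Type u} [AddCommGroup H] [Module R H]
  [AddCommGroup H'] [Module R H']

theorem nonempty_directLimit_equiv (c : LocalCohomologyPresentation 𝔞 M i H) :
    Nonempty (Module.DirectLimit (fun t => Ext (.of R (R ⧸ 𝔞 ^ t)) M i)
      (fun _ _ h => extPowMap 𝔞 M i h) ≃ₗ[R] H) := by
  refine ⟨LinearEquiv.ofBijective
    (Module.DirectLimit.lift R ℕ _ _ c.ι fun _ _ h x => c.ι_extPowMap h x)
    ⟨(injective_iff_map_eq_zero _).2 fun z hz => ?_, fun z => ?_⟩⟩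
  · obtain ⟨t, x, rfl⟩ := Module.DirectLimit.exists_of z
    rw [Module.DirectLimit.lift_of] at hz
    obtain ⟨s, h, hs⟩ := c.exists_extPowMap_eq_zero hz
    rw [← Module.DirectLimit.of_f (hij := h), hs, map_zero]
  · obtain ⟨t, x, rfl⟩ := c.exists_ι_eq z
    exact ⟨Module.DirectLimit.of R ℕ (fun t => Ext (.of R (R ⧸ 𝔞 ^ t)) M i)
      (fun _ _ h => extPowMap 𝔞 M i h) t x, Module.DirectLimit.lift_of _ _ _⟩

theorem nonempty_equiv (c : LocalCohomologyPresentation 𝔞 M i H)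
    (c' : LocalCohomologyPresentation 𝔞 M i H') : Nonempty (H ≃ₗ[R] H') :=
  let ⟨e⟩ := c.nonempty_directLimit_equiv
  let ⟨e'⟩ := c'.nonempty_directLimit_equiv
  ⟨e.symm.trans e'⟩

/-- The direct limit of `Hom(R ⧸ 𝔞 ^ t, M)` is `Γ_𝔞(M)`. -/
noncomputable def torsion (𝔞 : Ideal R) (M : ModuleCat.{u} R) :
    LocalCohomologyPresentation 𝔞 M 0 (idealTorsion 𝔞 M) where
  ι t := (extZeroEval (𝔞 ^ t) M).codRestrict _ fun x => ⟨t, fun _ ha => smul_extZeroEval x ha⟩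
  ι_extPowMap h x := Subtype.ext (extZeroEval_extPowMap h x)
  exists_ι_eq := by
    rintro ⟨z, t, hz⟩
    obtain ⟨x, hx⟩ := exists_extZeroEval_eq hz
    exact ⟨t, x, Subtype.ext hx⟩
  exists_extPowMap_eq_zero {t x} hx := by
    refine ⟨t, le_rfl, ?_⟩
    rw [extPowMap_refl]
    exact extZeroEval_injective _ _ (congr(($hx).1).trans (map_zero _).symm)

variable {S : ShortComplex (ModuleCat.{u} R)} (hS : S.ShortExact)

/-- Transport along a degreewise isomorphism of the direct systems. -/
noncomputable def congr {N : ModuleCat.{u} R} {j : ℕ} (c : LocalCohomologyPresentation 𝔞 M i H)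
    (δ : ∀ t, Ext (.of R (R ⧸ 𝔞 ^ t)) M i ≃ₗ[R] Ext (.of R (R ⧸ 𝔞 ^ t)) N j)
    (hδ : ∀ {s t : ℕ} (h : s ≤ t) x, extPowMap 𝔞 N j h (δ s x) = δ t (extPowMap 𝔞 M i h x)) :
    LocalCohomologyPresentation 𝔞 N j H where
  ι t := c.ι t ∘ₗ (δ t).symm.toLinearMap
  ι_extPowMap {s t} h x := by
    obtain ⟨x, rfl⟩ := (δ s).surjective x
    simp only [hδ, LinearMap.comp_apply, LinearEquiv.coe_coe, LinearEquiv.symm_apply_apply,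
      c.ι_extPowMap]
  exists_ι_eq z := by
    obtain ⟨t, x, rfl⟩ := c.exists_ι_eq z
    exact ⟨t, δ t x, congrArg (c.ι t) ((δ t).symm_apply_apply x)⟩
  exists_extPowMap_eq_zero {t x} hx := by
    obtain ⟨x, rfl⟩ := (δ t).surjective x
    rw [LinearMap.comp_apply, LinearEquiv.coe_coe, LinearEquiv.symm_apply_apply] at hx
    obtain ⟨s, h, hs⟩ := c.exists_extPowMap_eq_zero hx
    exact ⟨s, h, by rw [hδ, hs, map_zero]⟩

/-- `H^{i+1}_𝔞(S.X₁) = H^i_𝔞(S.X₃)` if `S.X₂` has no `Ext` from the modules `R ⧸ 𝔞 ^ t` in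
degrees `i` and `i + 1`. -/
noncomputable def ofShortExact₁ [∀ t, Subsingleton (Ext (.of R (R ⧸ 𝔞 ^ t)) S.X₂ i)]
    [∀ t, Subsingleton (Ext (.of R (R ⧸ 𝔞 ^ t)) S.X₂ (i + 1))]
    (c : LocalCohomologyPresentation 𝔞 S.X₃ i H) :
    LocalCohomologyPresentation 𝔞 S.X₁ (i + 1) H :=
  c.congr (fun t => extConnectingEquiv R (ModuleCat.of R (R ⧸ 𝔞 ^ t)) hS i)
    fun h x => extPowMap_comp h rfl x hS.extClass

/-- `H^{i+1}_𝔞(S.X₂) = H^{i+1}_𝔞(S.X₃)` if `S.X₁` is `𝔞`-power torsion. -/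
noncomputable def ofShortExact₂ [IsNoetherianRing R] (h₁ : IsPowerTorsion 𝔞 S.X₁)
    (c : LocalCohomologyPresentation 𝔞 S.X₃ (i + 1) H) :
    LocalCohomologyPresentation 𝔞 S.X₂ (i + 1) H where
  ι t := c.ι t ∘ₗ (Ext.mk₀ S.g).postcompOfLinear R (.of R (R ⧸ 𝔞 ^ t)) (add_zero (i + 1))
  ι_extPowMap h x :=
    (congrArg (c.ι _) (extPowMap_comp h (add_zero _) x (Ext.mk₀ S.g)).symm).trans
      (c.ι_extPowMap h _)
  exists_ι_eq z := by
    obtain ⟨t, x, rfl⟩ := c.exists_ι_eq z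
    obtain ⟨s, h, hs⟩ := exists_extPowMap_succ_eq_zero (i + 1) h₁ (x.comp hS.extClass rfl)
    rw [extPowMap_comp] at hs
    obtain ⟨y, hy⟩ := Ext.covariant_sequence_exact₃ _ hS _ rfl hs
    exact ⟨s, y, (congrArg (c.ι s) hy).trans (c.ι_extPowMap h x)⟩
  exists_extPowMap_eq_zero {t x} hx := by
    obtain ⟨s, h, hs⟩ := c.exists_extPowMap_eq_zero hx
    obtain ⟨y, hy⟩ := Ext.covariant_sequence_exact₂ _ hS _
      ((extPowMap_comp h (add_zero _) x (Ext.mk₀ S.g)).symm.trans hs)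
    obtain ⟨r, h', hr⟩ := exists_extPowMap_succ_eq_zero i h₁ y
    refine ⟨r, h.trans h', ?_⟩
    rw [← extPowMap_extPowMap h h', ← hy, extPowMap_comp, hr, Ext.zero_comp]

theorem nonempty_localCohomology (𝔞 : Ideal R) (M : ModuleCat.{u} R) (i : ℕ) :
    Nonempty (LocalCohomologyPresentation 𝔞 M i ((localCohomology 𝔞 i).obj M)) := by
  let I := localCohomology.idealPowersDiagram 𝔞
  have := localCohomology.hasColimitDiagram.{u, 0} I i
  let F : (ℕᵒᵖ)ᵒᵖ ⥤ ModuleCat.{u} R :=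
    localCohomology.diagram I i ⋙ (evaluation _ _).obj M
  let D : Limits.Cocone F := ((evaluation (ModuleCat.{u} R) (ModuleCat.{u} R)).obj M).mapCocone
    (Limits.colimit.cocone (localCohomology.diagram I i))
  have hD : Limits.IsColimit D := Limits.isColimitOfPreserves _ (Limits.colimit.isColimit _)
  let e (t : ℕ) : F.obj (.op (.op t)) ≃ₗ[R] Ext (.of R (R ⧸ 𝔞 ^ t)) M i :=
    extEquivAbelianExt R (ModuleCat.of R (R ⧸ 𝔞 ^ t)) M i
  let d (t : ℕ) : F.obj (.op (.op t)) →ₗ[R] (localCohomology 𝔞 i).obj M :=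
    (D.ι.app (.op (.op t))).hom
  have he {s t : ℕ} (h : s ≤ t) (x : F.obj (.op (.op s))) :
      e t ((F.map (homOfLE h).op.op).hom x) = extPowMap 𝔞 M i h (e s x) :=
    extEquivAbelianExt_naturality _ x
  have hd {s t : ℕ} (h : s ≤ t) (x : F.obj (.op (.op s))) :
      d t ((F.map (homOfLE h).op.op).hom x) = d s x :=
    congr(($(D.w (homOfLE h).op.op)).hom x)
  have : Limits.PreservesFilteredColimitsOfSize.{0, 0} (forget (ModuleCat.{u} R)) :=
    Limits.preservesFilteredColimitsOfSize_shrink _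
  have hde (t : ℕ) (x) : (d t ∘ₗ (e t).symm.toLinearMap) (e t x) = d t x :=
    congr(d t $((e t).symm_apply_apply x))
  refine ⟨⟨fun t => d t ∘ₗ (e t).symm.toLinearMap, fun {s t} h x => ?_,
    fun z => ?_, fun {t x} hx => ?_⟩⟩
  · obtain ⟨x, rfl⟩ := (e s).surjective x
    rw [← he, hde, hde, hd]
  · obtain ⟨⟨⟨t⟩⟩, x, hx⟩ := Limits.Concrete.isColimit_exists_rep F hD z
    exact ⟨t, e t x, (hde t x).trans hx⟩
  · obtain ⟨x, rfl⟩ := (e t).surjective x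
    rw [hde] at hx
    obtain ⟨⟨⟨s⟩⟩, f, g, hfg⟩ := (Limits.Concrete.isColimit_rep_eq_iff_exists F hD x 0).mp
      (hx.trans (map_zero (d t)).symm)
    have h : t ≤ s := leOfHom f.unop.unop
    refine ⟨s, h, ?_⟩
    rw [← he, LinearEquiv.map_eq_zero_iff]
    exact hfg.trans (map_zero (F.map g).hom)

end LocalCohomologyPresentation

end LocalCohomology

section TorsionShift

open Abelian

variable {R : Type u} [CommRing R] {𝔞 : Ideal R}

theorem shortExact_idealTorsion (𝔞 : Ideal R) (M : ModuleCat.{u} R) :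
    (ShortComplex.mk (X₁ := .of R (idealTorsion 𝔞 M)) (X₂ := M)
      (X₃ := .of R (M ⧸ idealTorsion 𝔞 M)) (ModuleCat.ofHom (idealTorsion 𝔞 M).subtype)
      (ModuleCat.ofHom (idealTorsion 𝔞 M).mkQ)
      (by ext; simp)).ShortExact :=
  shortExact_moduleCat (A := idealTorsion 𝔞 M) (B := M) (LinearMap.exact_subtype_mkQ _)
    (Submodule.subtype_injective _) (Submodule.mkQ_surjective _)

/-- `T` is the cokernel of an embedding of `M ⧸ Γ_𝔞(M)` into a module that is invisible to the
functors `Extⁱ(R ⧸ 𝔞 ^ t, -)`; this makes `H^{i+1}_𝔞(M) = H^i_𝔞(T)`. -/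
def IsTorsionShift (𝔞 : Ideal R) (M T : ModuleCat.{u} R) : Prop :=
  ∃ (E : ModuleCat.{u} R) (f : .of R (M ⧸ idealTorsion 𝔞 M) ⟶ E) (g : E ⟶ T) (w : f ≫ g = 0),
    (ShortComplex.mk f g w).ShortExact ∧
      ∀ t i, Subsingleton (Ext (.of R (R ⧸ 𝔞 ^ t)) E i)

theorem subsingleton_ext_quotient_idealTorsion [IsNoetherianRing R] (𝔞 : Ideal R)
    (J : ModuleCat.{u} R) [Injective J] (t : ℕ) (i : ℕ) :
    Subsingleton (Ext (.of R (R ⧸ 𝔞 ^ t)) (ModuleCat.of R (J ⧸ idealTorsion 𝔞 J)) i) := by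
  cases i with
  | zero => exact subsingleton_ext_zero_of_idealTorsion_eq_bot idealTorsion_quotient le_rfl
  | succ i =>
    have := injective_of_idealTorsion 𝔞 J
    refine subsingleton_of_forall_eq 0 fun x => ?_
    obtain ⟨y, rfl⟩ := Ext.covariant_sequence_exact₃ _ (shortExact_idealTorsion 𝔞 J) x rfl
      (Ext.eq_zero_of_injective _)
    rw [Ext.eq_zero_of_injective y, Ext.zero_comp]

theorem exists_isTorsionShift [IsNoetherianRing R] (𝔞 : Ideal R) (M : ModuleCat.{u} R) :
    ∃ T, IsTorsionShift 𝔞 M T := by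
  obtain ⟨⟨J, _, ι, hιm⟩⟩ := EnoughInjectives.presentation M
  have hι : Function.Injective ι.hom := (ModuleCat.mono_iff_injective _).mp hιm
  have hcomap : idealTorsion 𝔞 M = (idealTorsion 𝔞 J).comap ι.hom := by
    ext m
    refine exists_congr fun n => forall₂_congr fun a _ => ?_
    rw [← map_smul, map_eq_zero_iff _ hι]
  let f : (M ⧸ idealTorsion 𝔞 M) →ₗ[R] (J ⧸ idealTorsion 𝔞 J) :=
    Submodule.mapQ _ _ ι.hom hcomap.le
  have hf : Function.Injective f := by
    rw [← LinearMap.ker_eq_bot, Submodule.ker_mapQ, ← hcomap]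
    exact Submodule.mkQ_map_self _
  exact ⟨_, _, _, _, _, shortExact_moduleCat (f := f) (g := f.range.mkQ)
    (LinearMap.exact_map_mkQ_range f) hf (Submodule.mkQ_surjective _),
    subsingleton_ext_quotient_idealTorsion 𝔞 J⟩

theorem IsTorsionShift.nonempty_localCohomologyPresentation [IsNoetherianRing R]
    {M T : ModuleCat.{u} R} (hT : IsTorsionShift 𝔞 M T) {i : ℕ} {H : Type u} [AddCommGroup H]
    [Module R H] (c : LocalCohomologyPresentation 𝔞 T i H) :
    Nonempty (LocalCohomologyPresentation 𝔞 M (i + 1) H) := by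
  obtain ⟨E, f, g, w, hS, hE⟩ := hT
  exact ⟨.ofShortExact₂ (shortExact_idealTorsion 𝔞 M) isPowerTorsion_idealTorsion
    (.ofShortExact₁ hS c)⟩

theorem exists_torsionShift_sequence [IsNoetherianRing R] (𝔞 : Ideal R) (M : ModuleCat.{u} R) :
    ∃ T : ℕ → ModuleCat.{u} R, T 0 = M ∧ (∀ i, IsTorsionShift 𝔞 (T i) (T (i + 1))) ∧
      ∀ i, Nonempty ((localCohomology 𝔞 i).obj M ≃ₗ[R] idealTorsion 𝔞 (T i)) := by
  choose τ hτ using exists_isTorsionShift (R := R) 𝔞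
  have hc (i : ℕ) : ∀ N : ModuleCat.{u} R,
      Nonempty (LocalCohomologyPresentation 𝔞 N i (idealTorsion 𝔞 (τ^[i] N))) := by
    induction i with
    | zero => exact fun N => ⟨.torsion 𝔞 N⟩
    | succ i ih =>
      intro N
      obtain ⟨c⟩ := ih (τ N)
      exact (hτ N).nonempty_localCohomologyPresentation c
  refine ⟨fun i => τ^[i] M, rfl, fun i => ?_, fun i => ?_⟩
  · simpa only [Function.iterate_succ_apply'] using hτ _
  · obtain ⟨c⟩ := hc i M
    obtain ⟨c'⟩ := LocalCohomologyPresentation.nonempty_localCohomology 𝔞 M i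
    exact c'.nonempty_equiv c

end TorsionShift

section Cofinite

open Abelian

variable {R : Type u} [CommRing R] {𝔞 : Ideal R} {M N T : ModuleCat.{u} R}

theorem isCofinite_iff :
    IsCofinite 𝔞 N ↔ Module.support R N ⊆ PrimeSpectrum.zeroLocus (𝔞 : Set R) ∧
      ExtFinite 𝔞 N :=
  and_congr_right fun _ => forall_congr' fun i =>
    Module.Finite.equiv_iff (extEquivAbelianExt R (ModuleCat.of R (R ⧸ 𝔞)) N i)

theorem IsPowerTorsion.isCofinite (hN : IsPowerTorsion 𝔞 N) (h : ExtFinite 𝔞 N) :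
    IsCofinite 𝔞 N :=
  isCofinite_iff.2 ⟨fun _ hp => hN.le_of_mem_support hp, h⟩

theorem ExtFinite.congr (e : M ≃ₗ[R] N) (h : ExtFinite 𝔞 M) : ExtFinite 𝔞 N := fun i => by
  have := h i
  refine Module.Finite.of_surjective
    ((Ext.mk₀ e.toModuleIso.hom).postcompOfLinear R (.of R (R ⧸ 𝔞)) (add_zero i)) fun x =>
    ⟨x.comp (Ext.mk₀ e.toModuleIso.inv) (add_zero i), ?_⟩
  refine (Ext.comp_assoc x _ _ (add_zero i) (add_zero 0) (by lia)).trans ?_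
  rw [Ext.mk₀_comp_mk₀, Iso.inv_hom_id, Ext.comp_mk₀_id]

theorem IsCofinite.congr (e : M ≃ₗ[R] N) (h : IsCofinite 𝔞 M) : IsCofinite 𝔞 N := by
  rw [isCofinite_iff] at h ⊢
  exact ⟨e.support_eq ▸ h.1, h.2.congr e⟩

theorem IsTorsionShift.nonempty_ext_equiv (hT : IsTorsionShift 𝔞 M T) (i : ℕ) :
    Nonempty (Ext (ModuleCat.of R (R ⧸ 𝔞)) T i ≃ₗ[R]
      Ext (ModuleCat.of R (R ⧸ 𝔞)) (ModuleCat.of R (M ⧸ idealTorsion 𝔞 M)) (i + 1)) := by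
  obtain ⟨E, f, g, w, hS, hE⟩ := hT
  have hE' (i : ℕ) : Subsingleton (Ext (ModuleCat.of R (R ⧸ 𝔞)) E i) := pow_one 𝔞 ▸ hE 1 i
  exact ⟨extConnectingEquiv R (ModuleCat.of R (R ⧸ 𝔞)) hS i⟩

theorem finite_ext_zero_idealTorsion [IsNoetherianRing R]
    [Module.Finite R (Ext (ModuleCat.of R (R ⧸ 𝔞)) M 0)] :
    Module.Finite R (Ext (ModuleCat.of R (R ⧸ 𝔞)) (ModuleCat.of R (idealTorsion 𝔞 M)) 0) := by
  let f : ModuleCat.of R (idealTorsion 𝔞 M) ⟶ M := ModuleCat.ofHom (idealTorsion 𝔞 M).subtype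
  refine Module.Finite.of_injective
    ((Ext.mk₀ f).postcompOfLinear R (ModuleCat.of R (R ⧸ 𝔞)) (zero_add 0))
    fun x y hxy => extZeroEval_injective _ _ (Subtype.ext ?_)
  exact (extZeroEval_comp_mk₀ x f).symm.trans
    (congr(extZeroEval 𝔞 M $hxy).trans (extZeroEval_comp_mk₀ y f))

variable [IsNoetherianRing R]

theorem finite_ext_succ_idealTorsion {i : ℕ}
    [Module.Finite R (Ext (ModuleCat.of R (R ⧸ 𝔞)) M (i + 1))]
    [Module.Finite R (Ext (ModuleCat.of R (R ⧸ 𝔞)) (ModuleCat.of R (M ⧸ idealTorsion 𝔞 M)) i)] :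
    Module.Finite R (Ext (ModuleCat.of R (R ⧸ 𝔞)) (ModuleCat.of R (idealTorsion 𝔞 M)) (i + 1)) :=
  finite_of_exact (exact_postcomp_extClass_postcomp_f R (ModuleCat.of R (R ⧸ 𝔞))
    (shortExact_idealTorsion 𝔞 M) rfl)

theorem finite_ext_zero_of_idealTorsion
    [Module.Finite R (Ext (ModuleCat.of R (R ⧸ 𝔞)) (ModuleCat.of R (idealTorsion 𝔞 M)) 0)] :
    Module.Finite R (Ext (ModuleCat.of R (R ⧸ 𝔞)) M 0) := by
  have : Subsingleton (Ext (ModuleCat.of R (R ⧸ 𝔞)) (ModuleCat.of R (M ⧸ idealTorsion 𝔞 M)) 0) :=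
    subsingleton_ext_zero_of_idealTorsion_eq_bot idealTorsion_quotient (pow_one 𝔞).le
  exact finite_of_exact (exact_postcomp_f_postcomp_g R (ModuleCat.of R (R ⧸ 𝔞))
    (shortExact_idealTorsion 𝔞 M) 0)

theorem ExtFinite.quotient_idealTorsion (hM : ExtFinite 𝔞 M)
    (hΓ : ExtFinite 𝔞 (.of R (idealTorsion 𝔞 M))) :
    ExtFinite 𝔞 (.of R (M ⧸ idealTorsion 𝔞 M)) := fun i => by
  have := hM i
  have := hΓ (i + 1)
  exact finite_of_exact (exact_postcomp_g_postcomp_extClass R (ModuleCat.of R (R ⧸ 𝔞))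
    (shortExact_idealTorsion 𝔞 M) (rfl : i + 1 = i + 1))

theorem IsTorsionShift.extFinite (hT : IsTorsionShift 𝔞 M T) (hM : ExtFinite 𝔞 M)
    (hΓ : ExtFinite 𝔞 (.of R (idealTorsion 𝔞 M))) : ExtFinite 𝔞 T := fun i => by
  obtain ⟨e⟩ := hT.nonempty_ext_equiv i
  have := hM.quotient_idealTorsion hΓ (i + 1)
  exact .equiv e.symm

theorem IsTorsionShift.finite_ext_idealTorsion_of_le_two (hT : IsTorsionShift 𝔞 M T)
    (hM : ∀ i ≤ 2, Module.Finite R (Ext (ModuleCat.of R (R ⧸ 𝔞)) M i))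
    [Module.Finite R (Ext (ModuleCat.of R (R ⧸ 𝔞)) (ModuleCat.of R (idealTorsion 𝔞 T)) 0)] :
    ∀ i ≤ 2, Module.Finite R (Ext (ModuleCat.of R (R ⧸ 𝔞)) (ModuleCat.of R (idealTorsion 𝔞 M)) i)
  | 0, _ =>
    have := hM 0 (by lia)
    finite_ext_zero_idealTorsion
  | 1, _ => by
    have := hM 1 (by lia)
    have : Subsingleton (Ext (ModuleCat.of R (R ⧸ 𝔞)) (ModuleCat.of R (M ⧸ idealTorsion 𝔞 M)) 0) :=
      subsingleton_ext_zero_of_idealTorsion_eq_bot idealTorsion_quotient (pow_one 𝔞).le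
    exact finite_ext_succ_idealTorsion
  | 2, _ => by
    have := hM 2 le_rfl
    obtain ⟨e⟩ := hT.nonempty_ext_equiv 0
    have : Module.Finite R (Ext (ModuleCat.of R (R ⧸ 𝔞)) T 0) := finite_ext_zero_of_idealTorsion
    have := Module.Finite.equiv e
    exact finite_ext_succ_idealTorsion

theorem CofinitenessCondition.extFinite_idealTorsion (h𝔞 : CofinitenessCondition 𝔞 2)
    (hT : IsTorsionShift 𝔞 M T) (hM : ExtFinite 𝔞 M)
    (hΓT : ExtFinite 𝔞 (.of R (idealTorsion 𝔞 T))) :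
    ExtFinite 𝔞 (.of R (idealTorsion 𝔞 M)) :=
  have := hΓT 0
  h𝔞 _ isPowerTorsion_idealTorsion (hT.finite_ext_idealTorsion_of_le_two fun i _ => hM i)

theorem CofinitenessCondition.extFinite_idealTorsion_of_even_or_odd
    (h𝔞 : CofinitenessCondition 𝔞 2) {T : ℕ → ModuleCat.{u} R}
    (hT : ∀ i, IsTorsionShift 𝔞 (T i) (T (i + 1))) (h₀ : ExtFinite 𝔞 (T 0))
    (h : (∀ i, ExtFinite 𝔞 (.of R (idealTorsion 𝔞 (T (2 * i))))) ∨
      ∀ i, ExtFinite 𝔞 (.of R (idealTorsion 𝔞 (T (2 * i + 1))))) (i : ℕ) :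
    ExtFinite 𝔞 (.of R (idealTorsion 𝔞 (T i))) := by
  have hstep (i : ℕ) (hi : ExtFinite 𝔞 (T i)) : ExtFinite 𝔞 (.of R (idealTorsion 𝔞 (T i))) := by
    obtain ⟨k, rfl | rfl⟩ := i.even_or_odd'
    · exact h.elim (· k) fun h => h𝔞.extFinite_idealTorsion (hT _) hi (h k)
    · exact h.elim (fun h => h𝔞.extFinite_idealTorsion (hT _) hi (h (k + 1))) (· k)
  have hfin (i : ℕ) : ExtFinite 𝔞 (T i) := by
    induction i with
    | zero => exact h₀
    | succ i ih => exact (hT i).extFinite ih (hstep i ih)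
  exact hstep i (hfin i)

theorem CofinitenessCondition.isCofinite_localCohomology_of_even_or_odd
    (h𝔞 : CofinitenessCondition 𝔞 2) (hM : ExtFinite 𝔞 M)
    (h : (∀ i, IsCofinite 𝔞 ((localCohomology 𝔞 (2 * i)).obj M)) ∨
      ∀ i, IsCofinite 𝔞 ((localCohomology 𝔞 (2 * i + 1)).obj M)) (i : ℕ) :
    IsCofinite 𝔞 ((localCohomology 𝔞 i).obj M) := by
  obtain ⟨T, rfl, hT, he⟩ := exists_torsionShift_sequence 𝔞 M
  have hΓ (j : ℕ) (hj : IsCofinite 𝔞 ((localCohomology 𝔞 j).obj (T 0))) :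
      ExtFinite 𝔞 (.of R (idealTorsion 𝔞 (T j))) :=
    (isCofinite_iff.1 hj).2.congr (he j).some
  have hΓ_all := h𝔞.extFinite_idealTorsion_of_even_or_odd hT hM
    (h.imp (fun h j => hΓ _ (h j)) fun h j => hΓ _ (h j))
  have hcofinite : IsCofinite 𝔞 (.of R (idealTorsion 𝔞 (T i))) :=
    isPowerTorsion_idealTorsion.isCofinite (hΓ_all i)
  exact hcofinite.congr (he i).some.symm

end Cofinite

theorem localCohomology_isCofinite_of_even_or_odd_general
    {R : Type u} [CommRing R] [IsNoetherianRing R] (𝔞 : Ideal R)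
    (hcase : ringKrullDim (R ⧸ 𝔞) ≤ 2 ∨ ringKrullDim R ≤ 3 ∨ arithRank 𝔞 ≤ 2)
    (M : ModuleCat.{u} R) (hext : ∀ i : ℕ, Module.Finite R (extIdeal 𝔞 i M))
    (h : (∀ i : ℕ, IsCofinite 𝔞 ((localCohomology 𝔞 (2 * i)).obj M)) ∨
      (∀ i : ℕ, IsCofinite 𝔞 ((localCohomology 𝔞 (2 * i + 1)).obj M))) (i : ℕ) :
    IsCofinite 𝔞 ((localCohomology 𝔞 i).obj M) := by
  have h𝔞 : CofinitenessCondition 𝔞 2 := by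
    rcases hcase with hquot | hdim | hara
    · exact cofinitenessCondition_of_ringKrullDim_quotient_le hquot
    · exact cofinitenessCondition_of_ringKrullDim_le (hdim.trans_eq (by norm_num))
    · exact cofinitenessCondition_of_arithRank_le hara
  have hM : ExtFinite 𝔞 M := fun i =>
    (Module.Finite.equiv_iff (extEquivAbelianExt R (ModuleCat.of R (R ⧸ 𝔞)) M i)).1 (hext i)
  exact h𝔞.isCofinite_localCohomology_of_even_or_odd hM h i

/-- Yang–Shen, Corollary 4.3(3) (module case): let `𝔞` be a proper ideal of a noetherian ring
`R` with `dim R/𝔞 = 2`, or `dim R = 3`, or `ara 𝔞 = 2`, and let `M` be an `R`-module with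
`Ext^i_R(R/𝔞, M)` finitely generated for all `i`. If all even-indexed (or all odd-indexed)
local cohomology modules `H^i_𝔞(M)` are `𝔞`-cofinite, then `H^i_𝔞(M)` is `𝔞`-cofinite for
every `i`. -/
theorem localCohomology_isCofinite_of_even_or_odd
    {R : Type u} [CommRing R] [IsNoetherianRing R] (𝔞 : Ideal R) (ha : 𝔞 ≠ ⊤)
    (hcase : ringKrullDim (R ⧸ 𝔞) = 2 ∨ ringKrullDim R = 3 ∨ arithRank 𝔞 = 2)
    (M : ModuleCat.{u} R) (hext : ∀ i : ℕ, Module.Finite R (extIdeal 𝔞 i M))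
    (h : (∀ i : ℕ, IsCofinite 𝔞 ((localCohomology 𝔞 (2 * i)).obj M)) ∨
      (∀ i : ℕ, IsCofinite 𝔞 ((localCohomology 𝔞 (2 * i + 1)).obj M))) :
    ∀ i : ℕ, IsCofinite 𝔞 ((localCohomology 𝔞 i).obj M)  :=
  localCohomology_isCofinite_of_even_or_odd_general 𝔞 (hcase.imp Eq.le (.imp Eq.le Eq.le)) M hext h
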